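/- arXiv:2109.09877 — 4 statements merged into one kernel-verified Lean document; each statement's English description precedes it below -/
import Mathlib

section
/- Let p > 3 be a prime. Then ∑_{k=1}^{(p-1)/2} (p/2 - k)·H_{2k}^2/((p+1-2k)(p+2k)) ≡ q_p(2) - q_p(2)^2 + (1/6)·q_p(2)^3 + (1/3)·B_{p-3} modulo p (as rational numbers). -/
/-- Two rationals `a` and `b` are congruent modulo `p^r`:
the `p`-adic valuation of `a - b` is at least `r`, i.e. `a - b = c * p^r`
with the denominator of `c` not divisible by `p`. -/
def ratCongr (p r : ℕ) (a b : ℚ) : Prop :=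
  ∃ c : ℚ, a - b = c * (p : ℚ) ^ r ∧ ¬ (p ∣ c.den)

/-- The Fermat quotient `q_p(2) = (2^(p-1) - 1)/p` (an integer for odd primes),
viewed as a rational number. -/
def fermatQ (p : ℕ) : ℚ := ((2 : ℚ) ^ (p - 1) - 1) / p

open Finset

/-- The generalized harmonic number `∑_{j ≤ n} 1 / j ^ r` in `ZMod p`. -/
def zmodHarmonic (p r n : ℕ) : ZMod p := ∑ j ∈ range n, (((j + 1 : ℕ) : ZMod p)⁻¹) ^ r

section Sums

variable {p : ℕ}

theorem zmodHarmonic_zero (r : ℕ) : zmodHarmonic p r 0 = 0 := by simp [zmodHarmonic]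

theorem zmodHarmonic_succ (r n : ℕ) :
    zmodHarmonic p r (n + 1) = zmodHarmonic p r n + (((n + 1 : ℕ) : ZMod p)⁻¹) ^ r := by
  simp [zmodHarmonic, sum_range_succ]

theorem zmodHarmonic_pred (r : ℕ) {n : ℕ} (hn : 1 ≤ n) :
    zmodHarmonic p r (n - 1) = zmodHarmonic p r n - ((n : ZMod p)⁻¹) ^ r := by
  obtain ⟨m, rfl⟩ := Nat.exists_eq_add_of_le' hn
  simp [zmodHarmonic_succ]

theorem zmodHarmonic_eq_sum_Ico (r n : ℕ) :
    zmodHarmonic p r n = ∑ k ∈ Ico 1 (n + 1), ((k : ZMod p)⁻¹) ^ r := by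
  rw [zmodHarmonic, range_eq_Ico, sum_Ico_add' (fun k : ℕ ↦ ((k : ZMod p)⁻¹) ^ r) 0 n 1]

theorem sum_Ico_one_reflect {M : Type*} [AddCommMonoid M] (f : ℕ → M) (n : ℕ) :
    ∑ k ∈ Ico 1 n, f (n - k) = ∑ k ∈ Ico 1 n, f k := by
  refine sum_nbij' (fun k ↦ n - k) (fun k ↦ n - k) ?_ ?_ ?_ ?_ ?_ <;> intro k hk <;>
    simp only [mem_Ico] at * <;> omega

/-- A double sum over `1 ≤ k, n < p`, split according to the sign of `k + n - p`. The part above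
the antidiagonal is reflected to the part below it. -/
theorem sum_sum_Ico_eq_antidiagonals {M : Type*} [AddCommMonoid M] (f : ℕ → ℕ → M) (p : ℕ) :
    ∑ k ∈ Ico 1 p, ∑ n ∈ Ico 1 p, f k n =
      ∑ m ∈ Ico 1 p, ∑ n ∈ Ico 1 m, (f (m - n) n + f (p - (m - n)) (p - n)) +
        ∑ n ∈ Ico 1 p, f (p - n) n := by
  have below (g : ℕ → ℕ → M) :
      ∑ x ∈ Ico 1 p ×ˢ Ico 1 p with x.1 + x.2 < p, g x.1 x.2 =
        ∑ m ∈ Ico 1 p, ∑ n ∈ Ico 1 m, g (m - n) n := by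
    rw [sum_sigma']
    refine sum_nbij' (fun x ↦ ⟨x.1 + x.2, x.2⟩) (fun y ↦ (y.1 - y.2, y.2)) ?_ ?_ ?_ ?_ ?_
    · rintro ⟨a, b⟩ h
      simp only [mem_filter, mem_product, mem_sigma, mem_Ico] at *
      omega
    · rintro ⟨a, b⟩ h
      simp only [mem_filter, mem_product, mem_sigma, mem_Ico] at *
      omega
    · rintro ⟨a, b⟩ h
      simp
    · rintro ⟨a, b⟩ h
      simp only [mem_sigma, mem_Ico] at h
      simp only [Sigma.mk.injEq, heq_eq_eq, and_true]
      omega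
    · rintro ⟨a, b⟩ h
      simp
  have above : ∑ x ∈ Ico 1 p ×ˢ Ico 1 p with p < x.1 + x.2, f x.1 x.2 =
      ∑ x ∈ Ico 1 p ×ˢ Ico 1 p with x.1 + x.2 < p, f (p - x.1) (p - x.2) := by
    refine sum_nbij' (fun x ↦ (p - x.1, p - x.2)) (fun x ↦ (p - x.1, p - x.2)) ?_ ?_ ?_ ?_ ?_ <;>
      rintro ⟨a, b⟩ h <;> simp only [mem_filter, mem_product, mem_Ico, Prod.mk.injEq] at *
    · omega
    · omega
    · omega
    · omega
    · congr 1 <;> omega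
  have diagonal : ∑ x ∈ Ico 1 p ×ˢ Ico 1 p with x.1 + x.2 = p, f x.1 x.2 =
      ∑ n ∈ Ico 1 p, f (p - n) n := by
    refine sum_nbij' (fun x ↦ x.2) (fun n ↦ (p - n, n)) ?_ ?_ ?_ ?_ ?_
    · rintro ⟨a, b⟩ h
      simp only [mem_filter, mem_product, mem_Ico] at *
      omega
    · intro n h
      simp only [mem_filter, mem_product, mem_Ico] at *
      omega
    · rintro ⟨a, b⟩ h
      simp only [mem_filter, mem_product, mem_Ico, Prod.mk.injEq, and_true] at *
      omega
    · simp
    · rintro ⟨a, b⟩ h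
      simp only [mem_filter, mem_product, mem_Ico] at *
      rw [show p - b = a by omega]
  have split : ∑ x ∈ Ico 1 p ×ˢ Ico 1 p, f x.1 x.2 =
      ∑ x ∈ Ico 1 p ×ˢ Ico 1 p with x.1 + x.2 < p, f x.1 x.2 +
        (∑ x ∈ Ico 1 p ×ˢ Ico 1 p with x.1 + x.2 = p, f x.1 x.2 +
          ∑ x ∈ Ico 1 p ×ˢ Ico 1 p with p < x.1 + x.2, f x.1 x.2) := by
    simp only [sum_filter, ← sum_add_distrib]
    refine sum_congr rfl fun x _ ↦ ?_
    rcases lt_trichotomy (x.1 + x.2) p with h | h | h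
    · simp [h, h.ne, h.not_gt]
    · simp [h]
    · simp [h, h.ne', h.not_gt]
  rw [← sum_product', split, above, below, below fun a b ↦ f (p - a) (p - b), diagonal]
  simp only [sum_add_distrib]
  abel

theorem neg_one_pow_mul_self (R : Type*) [CommRing R] (n : ℕ) :
    (-1 : R) ^ n * (-1) ^ n = 1 := by
  rw [← mul_pow]
  simp

variable [Fact p.Prime]

theorem ZMod.natCast_ne_zero_of_lt {k : ℕ} (hk : 1 ≤ k) (hkp : k < p) : (k : ZMod p) ≠ 0 := by
  rw [Ne, ZMod.natCast_eq_zero_iff]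
  exact fun h ↦ absurd (Nat.le_of_dvd hk h) (by omega)

theorem inv_natCast_prime_sub {k : ℕ} (hk : k ≤ p) :
    ((p - k : ℕ) : ZMod p)⁻¹ = -(k : ZMod p)⁻¹ := by
  rw [Nat.cast_sub hk, CharP.cast_eq_zero, zero_sub, inv_neg]

theorem neg_one_pow_prime_sub (hp : p ≠ 2) {k : ℕ} (hk : k ≤ p) :
    (-1 : ZMod p) ^ (p - k) = -(-1) ^ k := by
  have h : (-1 : ZMod p) ^ (p - k) * (-1) ^ k = -1 := by
    rw [← pow_add, Nat.sub_add_cancel hk]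
    exact ((Fact.out : p.Prime).odd_of_ne_two hp).neg_one_pow
  rcases neg_one_pow_eq_or (ZMod p) k with h' | h' <;> rw [h'] at h ⊢ <;> grind

theorem zmodHarmonic_reflect {r : ℕ} (h0 : zmodHarmonic p r (p - 1) = 0) {k : ℕ} (hk : k < p) :
    zmodHarmonic p r (p - 1 - k) = -(-1) ^ r * zmodHarmonic p r k := by
  induction k with
  | zero => simp [h0, zmodHarmonic_zero]
  | succ k ih =>
    have h := ih (by omega)
    rw [show p - 1 - (k + 1) = (p - (k + 1)) - 1 by omega, zmodHarmonic_pred _ (by omega),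
      show p - (k + 1) = p - 1 - k by omega, h, show p - 1 - k = p - (k + 1) by omega,
      inv_natCast_prime_sub (by omega), zmodHarmonic_succ, neg_pow]
    ring

theorem zmodHarmonic_prime_sub {r : ℕ} (h0 : zmodHarmonic p r (p - 1) = 0) {k : ℕ} (hk : 1 ≤ k)
    (hkp : k < p) :
    zmodHarmonic p r (p - k) = -(-1) ^ r * (zmodHarmonic p r k - ((k : ZMod p)⁻¹) ^ r) := by
  rw [← zmodHarmonic_pred r hk, ← zmodHarmonic_reflect h0 (by omega)]
  congr 1
  omega

theorem sum_inv_pow_of_odd (hp : p ≠ 2) {r : ℕ} (hr : Odd r) :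
    ∑ k ∈ Ico 1 p, ((k : ZMod p)⁻¹) ^ r = 0 := by
  have h : ∑ k ∈ Ico 1 p, ((k : ZMod p)⁻¹) ^ r = -∑ k ∈ Ico 1 p, ((k : ZMod p)⁻¹) ^ r := by
    conv_lhs => rw [← sum_Ico_one_reflect]
    rw [← sum_neg_distrib]
    refine sum_congr rfl fun k hk ↦ ?_
    rw [inv_natCast_prime_sub (mem_Ico.1 hk).2.le, hr.neg_pow]
  have h2 : (2 : ZMod p) ≠ 0 := Ring.two_ne_zero (by rwa [ZMod.ringChar_zmod_n])
  have h3 : 2 * ∑ k ∈ Ico 1 p, ((k : ZMod p)⁻¹) ^ r = 0 := by linear_combination h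
  exact (mul_eq_zero.1 h3).resolve_left h2

theorem sum_Ico_natCast_pow (i : ℕ) :
    ∑ k ∈ Ico 1 p, (k : ZMod p) ^ i = if p - 1 ∣ i then -1 else 0 := by
  have h := FiniteField.sum_pow_units (ZMod p) i
  rw [ZMod.card] at h
  rw [← h]
  symm
  refine sum_bij (fun u _ ↦ (u : ZMod p).val) ?_ ?_ ?_ ?_
  · intro u _
    rw [mem_Ico]
    exact ⟨Nat.one_le_iff_ne_zero.2 ((ZMod.val_ne_zero _).2 u.ne_zero), ZMod.val_lt _⟩
  · intro u _ v _ huv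
    exact Units.ext (ZMod.val_injective p huv)
  · intro k hk
    rw [mem_Ico] at hk
    exact ⟨Units.mk0 k (ZMod.natCast_ne_zero_of_lt hk.1 hk.2), mem_univ _,
      ZMod.val_cast_of_lt hk.2⟩
  · simp

theorem inv_pow_eq_pow {k r : ℕ} (hk : 1 ≤ k) (hkp : k < p) (hr : r ≤ p - 1) :
    ((k : ZMod p)⁻¹) ^ r = (k : ZMod p) ^ (p - 1 - r) := by
  have h0 := ZMod.natCast_ne_zero_of_lt hk hkp
  have h := ZMod.pow_card_sub_one_eq_one h0
  rw [← Nat.sub_add_cancel hr, pow_add] at h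
  rw [inv_pow]
  exact (eq_inv_of_mul_eq_one_left h).symm

theorem sum_inv_pow_eq_zero {r : ℕ} (hr : 0 < r) (hrp : r < p - 1) :
    ∑ k ∈ Ico 1 p, ((k : ZMod p)⁻¹) ^ r = 0 := by
  rw [sum_congr rfl fun k hk ↦
    inv_pow_eq_pow (mem_Ico.1 hk).1 (mem_Ico.1 hk).2 hrp.le, sum_Ico_natCast_pow, if_neg]
  exact fun h ↦ absurd (Nat.le_of_dvd (by omega) h) (by omega)

theorem inv_mul_inv_sub {m n : ℕ} (hn : 1 ≤ n) (hnm : n < m) (hm : m < p) :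
    ((m - n : ℕ) : ZMod p)⁻¹ * (n : ZMod p)⁻¹ =
      (m : ZMod p)⁻¹ * ((n : ZMod p)⁻¹ + ((m - n : ℕ) : ZMod p)⁻¹) := by
  have h1 := ZMod.natCast_ne_zero_of_lt (p := p) (k := n) (by omega) (by omega)
  have h2 := ZMod.natCast_ne_zero_of_lt (p := p) (k := m - n) (by omega) (by omega)
  have h3 := ZMod.natCast_ne_zero_of_lt (p := p) (k := m) (by omega) (by omega)
  have h4 : (m : ZMod p) = n + (m - n : ℕ) := by
    rw [← Nat.cast_add]
    congr 1
    omega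
  field_simp
  rw [h4]
  ring

/-- For `m < p`, the convolution of `H_n` with `1 / n` is `H_m ^ 2 - H_m^{(2)}`. -/
theorem sum_zmodHarmonic_mul_inv {m : ℕ} (hm : m < p) :
    ∑ n ∈ range m, zmodHarmonic p 1 n * ((m - n : ℕ) : ZMod p)⁻¹ =
      zmodHarmonic p 1 m ^ 2 - zmodHarmonic p 2 m := by
  induction m with
  | zero => simp [zmodHarmonic_zero]
  | succ m ih =>
    have key : ∑ n ∈ range m, ((n + 1 : ℕ) : ZMod p)⁻¹ * ((m - n : ℕ) : ZMod p)⁻¹ =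
        2 * ((m + 1 : ℕ) : ZMod p)⁻¹ * zmodHarmonic p 1 m := by
      have h : ∀ n ∈ range m, ((n + 1 : ℕ) : ZMod p)⁻¹ * ((m - n : ℕ) : ZMod p)⁻¹ =
          ((m + 1 : ℕ) : ZMod p)⁻¹ *
            (((n + 1 : ℕ) : ZMod p)⁻¹ + ((m - 1 - n + 1 : ℕ) : ZMod p)⁻¹) := by
        intro n hn
        rw [mem_range] at hn
        have h := inv_mul_inv_sub (p := p) (m := m + 1) (n := n + 1) (by omega) (by omega) hm
        rw [Nat.add_sub_add_right] at h
        rw [mul_comm, h, show m - 1 - n + 1 = m - n by omega]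
      rw [sum_congr rfl h, ← mul_sum, sum_add_distrib,
        sum_range_reflect (fun n : ℕ ↦ ((n + 1 : ℕ) : ZMod p)⁻¹)]
      simp only [zmodHarmonic, pow_one]
      ring
    rw [sum_range_succ']
    simp only [zmodHarmonic_succ, zmodHarmonic_zero, pow_one, Nat.add_sub_add_right, add_mul,
      sum_add_distrib, ih (by omega), key]
    ring


theorem zmodHarmonic_prime_pred_of_sum {r : ℕ} (h : ∑ k ∈ Ico 1 p, ((k : ZMod p)⁻¹) ^ r = 0) :
    zmodHarmonic p r (p - 1) = 0 := by
  rw [zmodHarmonic_eq_sum_Ico, Nat.sub_add_cancel (Fact.out : p.Prime).one_le, h]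

theorem zmodHarmonic_one_prime_pred (hp : 3 < p) : zmodHarmonic p 1 (p - 1) = 0 :=
  zmodHarmonic_prime_pred_of_sum (sum_inv_pow_of_odd (by omega) odd_one)

theorem zmodHarmonic_two_prime_pred (hp : 3 < p) : zmodHarmonic p 2 (p - 1) = 0 :=
  zmodHarmonic_prime_pred_of_sum (sum_inv_pow_eq_zero (by omega) (by omega))

theorem ZMod.two_ne_zero_of_three_lt (hp : 3 < p) : (2 : ZMod p) ≠ 0 := by
  exact_mod_cast ZMod.natCast_ne_zero_of_lt (p := p) (k := 2) (by omega) (by omega)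

theorem ZMod.three_ne_zero_of_three_lt (hp : 3 < p) : (3 : ZMod p) ≠ 0 := by
  exact_mod_cast ZMod.natCast_ne_zero_of_lt (p := p) (k := 3) (by omega) (by omega)

/-- The effect of `k ↦ p - k` on sums of expressions in `(-1) ^ k`, `1 / k`, `H_k` and
`H_k^{(2)}`. -/
theorem sum_reflect_harmonic (hp : 3 < p) (f : ZMod p → ZMod p → ZMod p → ZMod p → ZMod p) :
    ∑ k ∈ Ico 1 p, f ((-1) ^ k) (k : ZMod p)⁻¹ (zmodHarmonic p 1 k) (zmodHarmonic p 2 k) =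
      ∑ k ∈ Ico 1 p, f (-(-1) ^ k) (-(k : ZMod p)⁻¹) (zmodHarmonic p 1 k - (k : ZMod p)⁻¹)
        ((k : ZMod p)⁻¹ ^ 2 - zmodHarmonic p 2 k) := by
  rw [← sum_Ico_one_reflect]
  refine sum_congr rfl fun k hk ↦ ?_
  obtain ⟨hk1, hkp⟩ := mem_Ico.1 hk
  rw [neg_one_pow_prime_sub (by omega) hkp.le, inv_natCast_prime_sub hkp.le,
    zmodHarmonic_prime_sub (zmodHarmonic_one_prime_pred hp) hk1 hkp,
    zmodHarmonic_prime_sub (zmodHarmonic_two_prime_pred hp) hk1 hkp]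
  congr 1 <;> ring

theorem sum_alternating_inv_sq (hp : 3 < p) :
    ∑ k ∈ Ico 1 p, (-1) ^ k * (k : ZMod p)⁻¹ ^ 2 = 0 := by
  have h := sum_reflect_harmonic hp fun e i _ _ ↦ e * i ^ 2
  simp only [neg_mul, neg_sq, sum_neg_distrib] at h
  refine (mul_eq_zero.1 ?_).resolve_left (ZMod.two_ne_zero_of_three_lt hp)
  linear_combination h

theorem sum_alternating_inv_mul_harmonic_two (hp : 3 < p) :
    ∑ k ∈ Ico 1 p, (-1) ^ k * (k : ZMod p)⁻¹ *
      (2 * zmodHarmonic p 2 k - (k : ZMod p)⁻¹ ^ 2) = 0 := by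
  have h := sum_reflect_harmonic hp fun e i _ G ↦ e * i * (2 * G - i ^ 2)
  refine (mul_eq_zero.1 ?_).resolve_left (ZMod.two_ne_zero_of_three_lt hp)
  rw [two_mul]
  nth_rewrite 1 [h]
  rw [← sum_add_distrib]
  exact sum_eq_zero fun k _ ↦ by ring

theorem sum_alternating_inv_mul_harmonic_sq_reflect (hp : 3 < p) :
    ∑ k ∈ Ico 1 p, (-1) ^ k * (k : ZMod p)⁻¹ * (zmodHarmonic p 1 k - (k : ZMod p)⁻¹) ^ 2 =
      ∑ k ∈ Ico 1 p, (-1) ^ k * (k : ZMod p)⁻¹ * zmodHarmonic p 1 k ^ 2 := by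
  rw [sum_reflect_harmonic hp fun e i H _ ↦ e * i * H ^ 2]
  simp

theorem sum_inv_mul_harmonic_sq (hp : 3 < p) :
    ∑ k ∈ Ico 1 p, (k : ZMod p)⁻¹ * zmodHarmonic p 1 k ^ 2 =
      ∑ k ∈ Ico 1 p, (k : ZMod p)⁻¹ ^ 2 * zmodHarmonic p 1 k := by
  have tele : ∑ k ∈ Ico 1 p, (zmodHarmonic p 1 k ^ 3 -
      (zmodHarmonic p 1 k - (k : ZMod p)⁻¹) ^ 3) = 0 := by
    have h := sum_reflect_harmonic hp fun _ _ H _ ↦ H ^ 3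
    rw [sum_sub_distrib, h, sub_self]
  have cube := sum_inv_pow_of_odd (p := p) (by omega) (r := 3) (by decide)
  refine mul_left_cancel₀ (ZMod.three_ne_zero_of_three_lt hp) ?_
  rw [← sub_eq_zero, mul_sum, mul_sum, ← sum_sub_distrib]
  rw [← tele, ← sub_eq_zero, ← sum_sub_distrib, ← neg_eq_zero, ← cube, ← sum_neg_distrib]
  exact sum_congr rfl fun k _ ↦ by ring

theorem sum_Ico_inv_eq (m : ℕ) (hm : 1 ≤ m) :
    ∑ n ∈ Ico 1 m, (n : ZMod p)⁻¹ = zmodHarmonic p 1 m - (m : ZMod p)⁻¹ := by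
  have h := zmodHarmonic_pred (p := p) 1 hm
  rw [pow_one] at h
  rw [← h, zmodHarmonic_eq_sum_Ico, Nat.sub_add_cancel hm]
  simp

theorem alternating_sum_sq (hp : 3 < p) :
    (∑ k ∈ Ico 1 p, (-1) ^ k * (k : ZMod p)⁻¹) ^ 2 =
      4 * ∑ k ∈ Ico 1 p, (-1) ^ k * (k : ZMod p)⁻¹ * zmodHarmonic p 1 k := by
  rw [sq, sum_mul_sum, sum_sum_Ico_eq_antidiagonals]
  have diag : ∑ n ∈ Ico 1 p, (-1) ^ (p - n) * ((p - n : ℕ) : ZMod p)⁻¹ *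
      ((-1) ^ n * (n : ZMod p)⁻¹) = 0 := by
    rw [← sum_inv_pow_eq_zero (p := p) (r := 2) (by omega) (by omega)]
    refine sum_congr rfl fun n hn ↦ ?_
    have hn := mem_Ico.1 hn
    rw [neg_one_pow_prime_sub (by omega) hn.2.le, inv_natCast_prime_sub hn.2.le]
    linear_combination (n : ZMod p)⁻¹ ^ 2 * neg_one_pow_mul_self (ZMod p) n
  have inner : ∀ m ∈ Ico 1 p, ∑ n ∈ Ico 1 m,
      ((-1) ^ (m - n) * ((m - n : ℕ) : ZMod p)⁻¹ * ((-1) ^ n * (n : ZMod p)⁻¹) +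
        (-1) ^ (p - (m - n)) * ((p - (m - n) : ℕ) : ZMod p)⁻¹ *
          ((-1) ^ (p - n) * ((p - n : ℕ) : ZMod p)⁻¹)) =
      4 * ((-1) ^ m * (m : ZMod p)⁻¹ * zmodHarmonic p 1 m) -
        4 * ((-1) ^ m * (m : ZMod p)⁻¹ ^ 2) := by
    intro m hm
    have hm := mem_Ico.1 hm
    have h : ∀ n ∈ Ico 1 m,
      ((-1) ^ (m - n) * ((m - n : ℕ) : ZMod p)⁻¹ * ((-1) ^ n * (n : ZMod p)⁻¹) +
        (-1) ^ (p - (m - n)) * ((p - (m - n) : ℕ) : ZMod p)⁻¹ *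
          ((-1) ^ (p - n) * ((p - n : ℕ) : ZMod p)⁻¹)) =
        2 * (-1) ^ m * (m : ZMod p)⁻¹ * ((n : ZMod p)⁻¹ + ((m - n : ℕ) : ZMod p)⁻¹) := by
      intro n hn
      have hn := mem_Ico.1 hn
      rw [neg_one_pow_prime_sub (by omega) (by omega : n ≤ p),
        neg_one_pow_prime_sub (by omega) (by omega : m - n ≤ p),
        inv_natCast_prime_sub (by omega : n ≤ p), inv_natCast_prime_sub (by omega : m - n ≤ p)]
      have hs : (-1 : ZMod p) ^ m = (-1) ^ (m - n) * (-1) ^ n := by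
        rw [← pow_add, Nat.sub_add_cancel hn.2.le]
      rw [hs]
      linear_combination 2 * (-1) ^ (m - n) * (-1) ^ n * inv_mul_inv_sub (p := p) hn.1 hn.2 hm.2
    rw [sum_congr rfl h, ← mul_sum, sum_add_distrib,
      sum_Ico_one_reflect (fun n : ℕ ↦ (n : ZMod p)⁻¹), sum_Ico_inv_eq m hm.1]
    ring
  rw [diag, add_zero, sum_congr rfl inner, sum_sub_distrib, ← mul_sum, ← mul_sum,
    sum_alternating_inv_sq hp]
  ring

/-- The convolution of `H_n + H_{n-1}` with `1 / n + 1 / (m - n)`, for `m < p`. -/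
theorem sum_Ico_inv_add_inv_mul_harmonic {m : ℕ} (hm : 1 ≤ m) (hmp : m < p) :
    ∑ n ∈ Ico 1 m, ((n : ZMod p)⁻¹ + ((m - n : ℕ) : ZMod p)⁻¹) *
        (2 * zmodHarmonic p 1 n - (n : ZMod p)⁻¹) =
      2 * (zmodHarmonic p 1 m - (m : ZMod p)⁻¹) ^ 2 + zmodHarmonic p 1 m ^ 2 -
        (2 * zmodHarmonic p 2 m - (m : ZMod p)⁻¹ ^ 2) := by
  obtain ⟨m, rfl⟩ := Nat.exists_eq_add_of_le' hm
  have tele (m : ℕ) : ∑ n ∈ range m, ((n + 1 : ℕ) : ZMod p)⁻¹ *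
      (2 * zmodHarmonic p 1 n + ((n + 1 : ℕ) : ZMod p)⁻¹) = zmodHarmonic p 1 m ^ 2 := by
    induction m with
    | zero => simp [zmodHarmonic_zero]
    | succ m ih =>
      rw [sum_range_succ, ih, zmodHarmonic_succ]
      ring
  have c1 := sum_zmodHarmonic_mul_inv (p := p) (m := m) (by omega)
  have c2 := sum_zmodHarmonic_mul_inv hmp
  rw [sum_range_succ'] at c2
  simp only [zmodHarmonic_zero, zero_mul, add_zero, Nat.add_sub_add_right] at c2
  rw [sum_Ico_eq_sum_range]
  have h : ∀ n ∈ range (m + 1 - 1), (((1 + n : ℕ) : ZMod p)⁻¹ +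
      ((m + 1 - (1 + n) : ℕ) : ZMod p)⁻¹) *
        (2 * zmodHarmonic p 1 (1 + n) - ((1 + n : ℕ) : ZMod p)⁻¹) =
      ((n + 1 : ℕ) : ZMod p)⁻¹ * (2 * zmodHarmonic p 1 n + ((n + 1 : ℕ) : ZMod p)⁻¹) +
      (zmodHarmonic p 1 n * ((m - n : ℕ) : ZMod p)⁻¹ +
        zmodHarmonic p 1 (n + 1) * ((m - n : ℕ) : ZMod p)⁻¹) := by
    intro n _
    rw [add_comm 1 n, Nat.add_sub_add_right, zmodHarmonic_succ]
    ring
  rw [sum_congr rfl h, Nat.add_sub_cancel, sum_add_distrib, sum_add_distrib, tele, c1, c2,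
    zmodHarmonic_succ, zmodHarmonic_succ]
  ring

theorem alternating_sum_mul_alternating_harmonic_sum (hp : 3 < p) :
    (∑ k ∈ Ico 1 p, (-1) ^ k * (k : ZMod p)⁻¹) *
        ∑ k ∈ Ico 1 p, (-1) ^ k * (k : ZMod p)⁻¹ * zmodHarmonic p 1 k =
      ∑ k ∈ Ico 1 p, (k : ZMod p)⁻¹ ^ 2 * zmodHarmonic p 1 k +
        3 * ∑ k ∈ Ico 1 p, (-1) ^ k * (k : ZMod p)⁻¹ * zmodHarmonic p 1 k ^ 2 := by
  have shift : ∑ k ∈ Ico 1 p, (-1) ^ k * (k : ZMod p)⁻¹ * zmodHarmonic p 1 k =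
      ∑ k ∈ Ico 1 p, (-1) ^ k * (k : ZMod p)⁻¹ * (zmodHarmonic p 1 k - (k : ZMod p)⁻¹) := by
    rw [sum_reflect_harmonic hp fun e i H _ ↦ e * i * H]
    simp
  rw [shift, sum_mul_sum, sum_sum_Ico_eq_antidiagonals]
  have diag : ∑ n ∈ Ico 1 p, (-1) ^ (p - n) * ((p - n : ℕ) : ZMod p)⁻¹ *
      ((-1) ^ n * (n : ZMod p)⁻¹ * (zmodHarmonic p 1 n - (n : ZMod p)⁻¹)) =
      ∑ k ∈ Ico 1 p, (k : ZMod p)⁻¹ ^ 2 * zmodHarmonic p 1 k := by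
    rw [← sub_zero (∑ k ∈ Ico 1 p, (k : ZMod p)⁻¹ ^ 2 * zmodHarmonic p 1 k),
      ← sum_inv_pow_of_odd (p := p) (by omega) (r := 3) (by decide), ← sum_sub_distrib]
    refine sum_congr rfl fun n hn ↦ ?_
    have hn := mem_Ico.1 hn
    rw [neg_one_pow_prime_sub (by omega) hn.2.le, inv_natCast_prime_sub hn.2.le]
    linear_combination (n : ZMod p)⁻¹ ^ 2 * (zmodHarmonic p 1 n - (n : ZMod p)⁻¹) *
      neg_one_pow_mul_self (ZMod p) n
  have inner : ∀ m ∈ Ico 1 p, ∑ n ∈ Ico 1 m,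
      ((-1) ^ (m - n) * ((m - n : ℕ) : ZMod p)⁻¹ *
          ((-1) ^ n * (n : ZMod p)⁻¹ * (zmodHarmonic p 1 n - (n : ZMod p)⁻¹)) +
        (-1) ^ (p - (m - n)) * ((p - (m - n) : ℕ) : ZMod p)⁻¹ *
          ((-1) ^ (p - n) * ((p - n : ℕ) : ZMod p)⁻¹ *
            (zmodHarmonic p 1 (p - n) - ((p - n : ℕ) : ZMod p)⁻¹))) =
      2 * ((-1) ^ m * (m : ZMod p)⁻¹ * (zmodHarmonic p 1 m - (m : ZMod p)⁻¹) ^ 2) +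
        (-1) ^ m * (m : ZMod p)⁻¹ * zmodHarmonic p 1 m ^ 2 -
        (-1) ^ m * (m : ZMod p)⁻¹ * (2 * zmodHarmonic p 2 m - (m : ZMod p)⁻¹ ^ 2) := by
    intro m hm
    have hm := mem_Ico.1 hm
    have h : ∀ n ∈ Ico 1 m,
      ((-1) ^ (m - n) * ((m - n : ℕ) : ZMod p)⁻¹ *
          ((-1) ^ n * (n : ZMod p)⁻¹ * (zmodHarmonic p 1 n - (n : ZMod p)⁻¹)) +
        (-1) ^ (p - (m - n)) * ((p - (m - n) : ℕ) : ZMod p)⁻¹ *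
          ((-1) ^ (p - n) * ((p - n : ℕ) : ZMod p)⁻¹ *
            (zmodHarmonic p 1 (p - n) - ((p - n : ℕ) : ZMod p)⁻¹))) =
        (-1) ^ m * (m : ZMod p)⁻¹ * (((n : ZMod p)⁻¹ + ((m - n : ℕ) : ZMod p)⁻¹) *
          (2 * zmodHarmonic p 1 n - (n : ZMod p)⁻¹)) := by
      intro n hn
      have hn := mem_Ico.1 hn
      rw [neg_one_pow_prime_sub (by omega) (by omega : n ≤ p),
        neg_one_pow_prime_sub (by omega) (by omega : m - n ≤ p),
        inv_natCast_prime_sub (by omega : n ≤ p), inv_natCast_prime_sub (by omega : m - n ≤ p),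
        zmodHarmonic_prime_sub (zmodHarmonic_one_prime_pred hp) hn.1 (by omega)]
      have hs : (-1 : ZMod p) ^ m = (-1) ^ (m - n) * (-1) ^ n := by
        rw [← pow_add, Nat.sub_add_cancel hn.2.le]
      rw [hs]
      linear_combination (-1) ^ (m - n) * (-1) ^ n *
        (2 * zmodHarmonic p 1 n - (n : ZMod p)⁻¹) * inv_mul_inv_sub (p := p) hn.1 hn.2 hm.2
    rw [sum_congr rfl h, ← mul_sum, sum_Ico_inv_add_inv_mul_harmonic hm.1 hm.2]
    ring
  rw [diag, sum_congr rfl inner, sum_sub_distrib, sum_add_distrib, ← mul_sum,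
    sum_alternating_inv_mul_harmonic_two hp, sum_alternating_inv_mul_harmonic_sq_reflect hp]
  ring

end Sums

section FermatQuotient

variable {p : ℕ} [Fact p.Prime]

theorem ZMod.choose_prime_pred {k : ℕ} (hk : k < p) : ((p - 1).choose k : ZMod p) = (-1) ^ k := by
  induction k with
  | zero => simp
  | succ k ih =>
    have hp := (Fact.out : p.Prime)
    have h : (p.choose (k + 1) : ZMod p) = 0 :=
      (ZMod.natCast_eq_zero_iff _ _).2 (hp.dvd_choose_self (by omega) hk)
    rw [Nat.choose_eq_choose_pred_add hp.pos k.succ_pos, Nat.succ_sub_one, Nat.cast_add,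
      ih (by omega)] at h
    rw [pow_succ]
    linear_combination h

theorem alternating_sum_eq_fermat_quotient {q : ℕ} (hq : 2 ^ (p - 1) = p * q + 1) :
    ∑ k ∈ Ico 1 p, (-1) ^ k * (k : ZMod p)⁻¹ = -2 * q := by
  have hp := (Fact.out : p.Prime)
  have hd : ∀ k, ∃ d, k ∈ Ico 1 p → p.choose k = p * d := by
    intro k
    by_cases hk : k ∈ Ico 1 p
    · obtain ⟨hk1, hkp⟩ := mem_Ico.1 hk
      obtain ⟨d, hd⟩ := hp.dvd_choose_self (by omega) hkp
      exact ⟨d, fun _ ↦ hd⟩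
    · exact ⟨0, fun h ↦ absurd h hk⟩
  choose d hd using hd
  have hsum : ∑ k ∈ Ico 1 p, d k = 2 * q := by
    have h := Nat.sum_range_choose p
    rw [sum_range_succ, range_eq_Ico, sum_eq_sum_Ico_succ_bot hp.pos, zero_add,
      sum_congr rfl hd, ← mul_sum, ← Nat.sub_add_cancel hp.one_le, pow_succ,
      Nat.sub_add_cancel hp.one_le, hq] at h
    simp only [Nat.choose_zero_right, Nat.choose_self] at h
    refine Nat.eq_of_mul_eq_mul_left hp.pos ?_
    linarith
  have hval : ∀ k ∈ Ico 1 p, (-1) ^ k * (k : ZMod p)⁻¹ = -(d k : ZMod p) := by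
    intro k hk
    obtain ⟨hk1, hkp⟩ := mem_Ico.1 hk
    have h := Nat.add_one_mul_choose_eq (p - 1) (k - 1)
    rw [Nat.sub_add_cancel hp.one_le, Nat.sub_add_cancel hk1, hd k hk, mul_assoc] at h
    have h := congrArg (Nat.cast : ℕ → ZMod p) (Nat.eq_of_mul_eq_mul_left hp.pos h)
    rw [ZMod.choose_prime_pred (by omega), Nat.cast_mul] at h
    have hk0 := ZMod.natCast_ne_zero_of_lt hk1 hkp
    rw [← Nat.sub_add_cancel hk1, pow_succ, Nat.sub_add_cancel hk1, h]
    field_simp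
  rw [sum_congr rfl hval, sum_neg_distrib, ← Nat.cast_sum, hsum]
  push_cast
  ring

end FermatQuotient

/-- The rational number `x` is `p`-integral and reduces to `z` modulo `p`. -/
def RatReduces (p : ℕ) (x : ℚ) (z : ZMod p) : Prop :=
  ∃ n d : ℤ, (d : ZMod p) ≠ 0 ∧ x * d = n ∧ z * d = n

namespace RatReduces

variable {p : ℕ}

theorem intCast [Fact p.Prime] (n : ℤ) : RatReduces p n n := ⟨n, 1, by simp⟩

theorem natCast [Fact p.Prime] (n : ℕ) : RatReduces p n n := by exact_mod_cast intCast (n : ℤ)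

variable [Fact p.Prime] {x y : ℚ} {z w : ZMod p}

theorem add (hx : RatReduces p x z) (hy : RatReduces p y w) : RatReduces p (x + y) (z + w) := by
  obtain ⟨n, d, hd, hx, hz⟩ := hx
  obtain ⟨m, e, he, hy, hw⟩ := hy
  refine ⟨n * e + m * d, d * e, by simp [hd, he], ?_, ?_⟩ <;> push_cast
  · linear_combination (e : ℚ) * hx + d * hy
  · linear_combination (e : ZMod p) * hz + d * hw

theorem mul (hx : RatReduces p x z) (hy : RatReduces p y w) : RatReduces p (x * y) (z * w) := by
  obtain ⟨n, d, hd, hx, hz⟩ := hx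
  obtain ⟨m, e, he, hy, hw⟩ := hy
  refine ⟨n * m, d * e, by simp [hd, he], ?_, ?_⟩ <;> push_cast
  · linear_combination (y * e) * hx + n * hy
  · linear_combination (w * e) * hz + n * hw

theorem neg (hx : RatReduces p x z) : RatReduces p (-x) (-z) := by
  simpa using (intCast (-1)).mul hx

theorem sub (hx : RatReduces p x z) (hy : RatReduces p y w) : RatReduces p (x - y) (z - w) := by
  simpa [sub_eq_add_neg] using hx.add hy.neg

theorem pow (hx : RatReduces p x z) (r : ℕ) : RatReduces p (x ^ r) (z ^ r) := by
  induction r with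
  | zero => simpa using natCast (p := p) 1
  | succ r ih =>
    rw [pow_succ, pow_succ]
    exact ih.mul hx

theorem inv (hx : RatReduces p x z) (hz0 : z ≠ 0) : RatReduces p x⁻¹ z⁻¹ := by
  obtain ⟨n, d, hd, hx, hz⟩ := hx
  have hn : (n : ZMod p) ≠ 0 := hz ▸ mul_ne_zero hz0 hd
  have hx0 : x ≠ 0 := by
    rintro rfl
    rw [zero_mul, eq_comm, Int.cast_eq_zero] at hx
    simp [hx] at hn
  refine ⟨d, n, hn, ?_, ?_⟩
  · rw [← hx]
    field_simp
  · rw [← hz]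
    field_simp

theorem div (hx : RatReduces p x z) (hy : RatReduces p y w) (hw : w ≠ 0) :
    RatReduces p (x / y) (z / w) := by
  rw [div_eq_mul_inv, div_eq_mul_inv]
  exact hx.mul (hy.inv hw)

theorem sum {ι : Type*} {s : Finset ι} {f : ι → ℚ} {g : ι → ZMod p}
    (h : ∀ i ∈ s, RatReduces p (f i) (g i)) : RatReduces p (∑ i ∈ s, f i) (∑ i ∈ s, g i) := by
  classical
  induction s using Finset.induction_on with
  | empty => simpa using natCast (p := p) 0
  | insert a s ha ih =>
    rw [sum_insert ha, sum_insert ha]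
    exact (h a (mem_insert_self a s)).add (ih fun i hi ↦ h i (mem_insert_of_mem hi))

theorem unique (hx : RatReduces p x z) (hx' : RatReduces p x w) : z = w := by
  obtain ⟨n, d, hd, h, hz⟩ := hx.sub hx'
  rw [sub_self, zero_mul, eq_comm, Int.cast_eq_zero] at h
  rw [h, Int.cast_zero] at hz
  exact sub_eq_zero.1 ((mul_eq_zero.1 hz).resolve_right hd)

theorem ratCongr_one (hx : RatReduces p x z) (hy : RatReduces p y z) : ratCongr p 1 x y := by
  obtain ⟨n, d, hd, h, hz⟩ := hx.sub hy
  rw [sub_self, zero_mul, eq_comm, ZMod.intCast_zmod_eq_zero_iff_dvd] at hz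
  obtain ⟨m, rfl⟩ := hz
  have hd0 : (d : ℚ) ≠ 0 := by
    rintro h
    rw [Int.cast_eq_zero] at h
    simp [h] at hd
  refine ⟨m / d, ?_, fun hdvd ↦ hd ?_⟩
  · push_cast at h
    field_simp
    linear_combination h
  · rw [ZMod.intCast_zmod_eq_zero_iff_dvd]
    exact (Int.natCast_dvd_natCast.2 hdvd).trans (by exact_mod_cast Rat.den_dvd m d)

end RatReduces

section Bernoulli

variable {p : ℕ} [Fact p.Prime]

theorem exists_ratReduces_bernoulli {n : ℕ} (hn : n + 1 < p) :
    ∃ z, RatReduces p (bernoulli n) z := by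
  induction n using Nat.strong_induction_on with
  | _ n ih =>
    have h : ∀ k, ∃ z, k ∈ range n → RatReduces p (bernoulli k) z := by
      intro k
      by_cases hk : k < n
      · obtain ⟨z, hz⟩ := ih k hk (by omega)
        exact ⟨z, fun _ ↦ hz⟩
      · exact ⟨0, fun h ↦ absurd (mem_range.1 h) hk⟩
    choose z hz using h
    have hrec := sum_bernoulli (n + 1)
    rw [sum_range_succ, Nat.choose_succ_self_right] at hrec
    have hn0 : ((n + 1 : ℕ) : ℚ) ≠ 0 := by positivity
    have heq : bernoulli n = (((if n + 1 = 1 then 1 else 0 : ℕ) : ℚ) -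
        ∑ k ∈ range n, ((n + 1).choose k : ℚ) * bernoulli k) / ((n + 1 : ℕ) : ℚ) := by
      rw [eq_div_iff hn0]
      push_cast at hrec ⊢
      linear_combination hrec
    rw [heq]
    exact ⟨_, ((RatReduces.natCast _).sub (RatReduces.sum fun k hk ↦
      (RatReduces.natCast _).mul (hz k hk))).div (RatReduces.natCast _)
      (ZMod.natCast_ne_zero_of_lt (by omega) hn)⟩

theorem sum_inv_sq_mul_harmonic_eq_bernoulli (hp : 3 < p) {β : ZMod p}
    (hβ : RatReduces p (bernoulli (p - 3)) β) :
    ∑ k ∈ Ico 1 p, (k : ZMod p)⁻¹ ^ 2 * zmodHarmonic p 1 k = β := by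
  have h : ∀ k, ∃ z, k ∈ range (p - 1) → RatReduces p (bernoulli k) z := by
    intro k
    by_cases hk : k + 1 < p
    · obtain ⟨z, hz⟩ := exists_ratReduces_bernoulli hk
      exact ⟨z, fun _ ↦ hz⟩
    · exact ⟨0, fun h ↦ absurd (mem_range.1 h) (by omega)⟩
  choose z hz using h
  have hzβ : z (p - 3) = β := (hz _ (mem_range.2 (by omega))).unique hβ
  have faulhaber : ∀ n ∈ Ico 1 p, zmodHarmonic p 1 n - (n : ZMod p)⁻¹ =
      ∑ i ∈ range (p - 1), -(z i * ((p - 1).choose i) * (n : ZMod p) ^ (p - 1 - i)) := by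
    intro n hn
    obtain ⟨hn1, hnp⟩ := mem_Ico.1 hn
    have hs := sum_range_pow n (p - 2)
    rw [show p - 2 + 1 = p - 1 by omega] at hs
    have hl : RatReduces p (∑ k ∈ range n, (k : ℚ) ^ (p - 2))
        (∑ k ∈ range n, (k : ZMod p) ^ (p - 2)) :=
      RatReduces.sum fun k _ ↦ (RatReduces.natCast k).pow _
    have hr : RatReduces p (∑ i ∈ range (p - 1), bernoulli i * ((p - 1).choose i) *
        (n : ℚ) ^ (p - 1 - i) / ((p - 1 : ℕ) : ℚ))
        (∑ i ∈ range (p - 1), z i * ((p - 1).choose i) * (n : ZMod p) ^ (p - 1 - i) /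
          ((p - 1 : ℕ) : ZMod p)) :=
      RatReduces.sum fun i hi ↦ (((hz i hi).mul (RatReduces.natCast _)).mul
        ((RatReduces.natCast n).pow _)).div (RatReduces.natCast _)
        (ZMod.natCast_ne_zero_of_lt (by omega) (by omega))
    have hcast : (((p - 2 : ℕ) : ℚ) + 1) = ((p - 1 : ℕ) : ℚ) := by
      rw [← Nat.cast_add_one]
      congr 1
      omega
    rw [hcast] at hs
    rw [hs] at hl
    have heq := hl.unique hr
    have hlast : ((p - 1 : ℕ) : ZMod p) = -1 := by
      rw [Nat.cast_sub (by omega)]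
      simp
    rw [← sum_Ico_inv_eq n hn1]
    rw [range_eq_Ico, sum_eq_sum_Ico_succ_bot hn1, Nat.cast_zero, zero_pow (by omega),
      zero_add, zero_add] at heq
    have hinv : ∀ k ∈ Ico 1 n, (k : ZMod p)⁻¹ = (k : ZMod p) ^ (p - 2) := by
      intro k hk
      have hk := mem_Ico.1 hk
      have := inv_pow_eq_pow (p := p) (k := k) (r := 1) hk.1 (by omega) (by omega)
      rwa [pow_one, show p - 1 - 1 = p - 2 by omega] at this
    rw [sum_congr rfl hinv, heq, hlast]
    exact sum_congr rfl fun i _ ↦ by rw [div_neg, div_one]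
  have cube := sum_inv_pow_of_odd (p := p) (by omega) (r := 3) (by decide)
  have hsplit : ∑ k ∈ Ico 1 p, (k : ZMod p)⁻¹ ^ 2 * zmodHarmonic p 1 k =
      ∑ k ∈ Ico 1 p, (k : ZMod p)⁻¹ ^ 2 * (zmodHarmonic p 1 k - (k : ZMod p)⁻¹) := by
    rw [← sub_eq_zero, ← sum_sub_distrib, ← cube]
    exact sum_congr rfl fun k _ ↦ by ring
  have hexp : ∀ k ∈ Ico 1 p, (k : ZMod p)⁻¹ ^ 2 * (zmodHarmonic p 1 k - (k : ZMod p)⁻¹) =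
      ∑ i ∈ range (p - 1), -(z i * ((p - 1).choose i)) *
        (k : ZMod p) ^ (p - 3 + (p - 1 - i)) := by
    intro k hk
    obtain ⟨hk1, hkp⟩ := mem_Ico.1 hk
    rw [faulhaber k hk, mul_sum, inv_pow_eq_pow hk1 hkp (by omega),
      show p - 1 - 2 = p - 3 by omega]
    refine sum_congr rfl fun i _ ↦ ?_
    rw [pow_add]
    ring
  rw [hsplit, sum_congr rfl hexp, sum_comm]
  simp only [← mul_sum, sum_Ico_natCast_pow]
  rw [sum_eq_single (p - 3)]
  · rw [if_pos ⟨1, by omega⟩, hzβ, ZMod.choose_prime_pred (by omega),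
      neg_one_pow_prime_sub (by omega) (by omega)]
    ring
  · intro i hi hne
    rw [mem_range] at hi
    rw [if_neg, mul_zero]
    rintro ⟨c, hc⟩
    rcases lt_or_ge c 2 with h2 | h2
    · interval_cases c <;> omega
    · have := Nat.mul_le_mul_left (p - 1) h2
      omega
  · intro h
    exact absurd (mem_range.2 (by omega)) h

end Bernoulli

theorem sum_Icc_pairs {M : Type*} [AddCommMonoid M] (f : ℕ → M) (h : ℕ) :
    ∑ k ∈ Icc 1 h, (f (2 * k - 1) + f (2 * k)) = ∑ n ∈ Ico 1 (2 * h + 1), f n := by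
  induction h with
  | zero => simp
  | succ h ih =>
    rw [sum_Icc_succ_top (by omega), ih, show 2 * (h + 1) + 1 = 2 * h + 1 + 1 + 1 by ring,
      sum_Ico_succ_top (b := 2 * h + 1 + 1) (by omega), sum_Ico_succ_top (b := 2 * h + 1) (by omega),
      add_assoc]
    rfl

section Main

variable {p : ℕ} [Fact p.Prime]

theorem ratReduces_harmonic {n : ℕ} (hn : n < p) :
    RatReduces p (harmonic n) (zmodHarmonic p 1 n) := by
  simp only [harmonic, zmodHarmonic, pow_one]
  exact RatReduces.sum fun i hi ↦ (RatReduces.natCast _).inv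
    (ZMod.natCast_ne_zero_of_lt (by omega) (by rw [mem_range] at hi; omega))

theorem three_mul_harmonic_sum_eq (hp : 3 < p) {q : ℕ} (hq : 2 ^ (p - 1) = p * q + 1)
    {β : ZMod p} (hβ : RatReduces p (bernoulli (p - 3)) β) :
    3 * ∑ k ∈ Icc 1 ((p - 1) / 2),
        zmodHarmonic p 1 (2 * k) ^ 2 * ((2 * k - 1 : ℕ) : ZMod p)⁻¹ =
      6 * q - 6 * q ^ 2 + q ^ 3 + 2 * β := by
  have hodd := (Fact.out : p.Prime).odd_of_ne_two (by omega)
  have h2 := ZMod.two_ne_zero_of_three_lt hp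
  set E := ∑ k ∈ Ico 1 p, (-1) ^ k * (k : ZMod p)⁻¹ with hE
  set F := ∑ k ∈ Ico 1 p, (-1) ^ k * (k : ZMod p)⁻¹ * zmodHarmonic p 1 k with hF
  set A := ∑ k ∈ Ico 1 p, (-1) ^ k * (k : ZMod p)⁻¹ * zmodHarmonic p 1 k ^ 2 with hA
  have hEq : E = -2 * q := alternating_sum_eq_fermat_quotient hq
  have hEE : E ^ 2 = 4 * F := alternating_sum_sq hp
  have hEF := alternating_sum_mul_alternating_harmonic_sum hp
  have hb := sum_inv_sq_mul_harmonic_eq_bernoulli hp hβ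
  have hH := sum_inv_mul_harmonic_sq hp
  have hsq := sum_inv_pow_eq_zero (p := p) (r := 2) (by omega) (by omega)
  rw [hb] at hEF hH
  rw [← hE, ← hF, ← hA] at hEF
  let f : ℕ → ZMod p := fun n ↦
    (n : ZMod p)⁻¹ * zmodHarmonic p 1 n ^ 2 -
      (-1) ^ n * (n : ZMod p)⁻¹ * zmodHarmonic p 1 n ^ 2 -
      4 * ((-1) ^ n * (n : ZMod p)⁻¹ * zmodHarmonic p 1 n) -
      2 * ((-1) ^ n * (n : ZMod p)⁻¹) +
      ((n : ZMod p)⁻¹ ^ 2 + (-1) ^ n * (n : ZMod p)⁻¹ ^ 2)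
  have hf : ∑ n ∈ Ico 1 p, f n = β - A - 4 * F - 2 * E := by
    simp only [f, sum_sub_distrib, sum_add_distrib, ← mul_sum, hH, hsq,
      sum_alternating_inv_sq hp]
    ring
  have hpair : ∀ k ∈ Icc 1 ((p - 1) / 2),
      f (2 * k - 1) + f (2 * k) =
        2 * (zmodHarmonic p 1 (2 * k) ^ 2 * ((2 * k - 1 : ℕ) : ZMod p)⁻¹) := by
    intro k hk
    rw [mem_Icc] at hk
    have hm0 := ZMod.natCast_ne_zero_of_lt (p := p) (k := 2 * k - 1) (by omega) (by omega)
    have hn0 := ZMod.natCast_ne_zero_of_lt (p := p) (k := 2 * k) (by omega) (by omega)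
    have hmn : ((2 * k : ℕ) : ZMod p) = ((2 * k - 1 : ℕ) : ZMod p) + 1 := by
      rw [← Nat.cast_add_one]
      congr 1
      omega
    have hHn := zmodHarmonic_pred (p := p) 1 (n := 2 * k) (by omega)
    have hem : (-1 : ZMod p) ^ (2 * k - 1) = -1 := Odd.neg_one_pow ⟨k - 1, by omega⟩
    have hen : (-1 : ZMod p) ^ (2 * k) = 1 := (even_two_mul k).neg_one_pow
    have hprod : ((2 * k - 1 : ℕ) : ZMod p)⁻¹ * ((2 * k : ℕ) : ZMod p)⁻¹ =
        ((2 * k - 1 : ℕ) : ZMod p)⁻¹ - ((2 * k : ℕ) : ZMod p)⁻¹ := by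
      field_simp
      rw [hmn]
      ring
    simp only [f, hem, hen, hHn, pow_one]
    generalize zmodHarmonic p 1 (2 * k) = H at *
    generalize ((2 * k - 1 : ℕ) : ZMod p)⁻¹ = i at *
    generalize ((2 * k : ℕ) : ZMod p)⁻¹ = j at *
    linear_combination (-4 * H + 2 * j - 2) * hprod
  have hsum := sum_Icc_pairs f ((p - 1) / 2)
  rw [sum_congr rfl hpair, ← mul_sum,
    show 2 * ((p - 1) / 2) + 1 = p by obtain ⟨c, rfl⟩ := hodd; omega, hf] at hsum
  have hF2 : F = q ^ 2 := by
    refine mul_left_cancel₀ h2 (mul_left_cancel₀ h2 ?_)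
    rw [hEq] at hEE
    linear_combination -hEE
  rw [hEq, hF2] at hEF hsum
  refine mul_left_cancel₀ h2 ?_
  linear_combination 3 * hsum + hEF

end Main

theorem sum_H2k_sq_congr (p : ℕ) (hp : p.Prime) (hp3 : 3 < p) :
    ratCongr p 1
      (∑ k ∈ Finset.Icc 1 ((p - 1) / 2),
        ((p : ℚ) / 2 - k) * harmonic (2 * k) ^ 2 /
          (((p : ℚ) + 1 - 2 * k) * ((p : ℚ) + 2 * k)))
      (fermatQ p - fermatQ p ^ 2 + (1 / 6) * fermatQ p ^ 3 + (1 / 3) * bernoulli (p - 3)) := by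
  have : Fact p.Prime := ⟨hp⟩
  have h2 := ZMod.two_ne_zero_of_three_lt hp3
  have h3 := ZMod.three_ne_zero_of_three_lt hp3
  have h6 : (6 : ZMod p) ≠ 0 := by
    rw [show (6 : ZMod p) = 2 * 3 by norm_num]
    exact mul_ne_zero h2 h3
  obtain ⟨β, hβ⟩ := exists_ratReduces_bernoulli (p := p) (n := p - 3) (by omega)
  obtain ⟨q, hq⟩ : ∃ q, 2 ^ (p - 1) = p * q + 1 := by
    have h : ((2 ^ (p - 1) - 1 : ℕ) : ZMod p) = 0 := by
      rw [Nat.cast_sub Nat.one_le_two_pow]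
      push_cast
      rw [ZMod.pow_card_sub_one_eq_one h2, sub_self]
    obtain ⟨q, hq⟩ := (ZMod.natCast_eq_zero_iff _ _).1 h
    have := Nat.one_le_two_pow (n := p - 1)
    exact ⟨q, by omega⟩
  have hfq : fermatQ p = (q : ℚ) := by
    have hp0 : (p : ℚ) ≠ 0 := by exact_mod_cast hp.ne_zero
    have h : (2 : ℚ) ^ (p - 1) = p * q + 1 := by exact_mod_cast hq
    rw [fermatQ, h]
    field_simp
    ring
  have hQ : RatReduces p (fermatQ p) q := hfq ▸ RatReduces.natCast q
  have two : RatReduces p 2 2 := by exact_mod_cast RatReduces.natCast (p := p) 2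
  have three : RatReduces p 3 3 := by exact_mod_cast RatReduces.natCast (p := p) 3
  have six : RatReduces p 6 6 := by exact_mod_cast RatReduces.natCast (p := p) 6
  have one : RatReduces p 1 1 := by exact_mod_cast RatReduces.natCast (p := p) 1
  have hright := ((hQ.sub (hQ.pow 2)).add ((one.div six h6).mul (hQ.pow 3))).add
    ((one.div three h3).mul hβ)
  have hp0 : (p : ZMod p) = 0 := CharP.cast_eq_zero _ _
  have hleft : RatReduces p (∑ k ∈ Finset.Icc 1 ((p - 1) / 2),
      ((p : ℚ) / 2 - k) * harmonic (2 * k) ^ 2 /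
        (((p : ℚ) + 1 - 2 * k) * ((p : ℚ) + 2 * k)))
      (∑ k ∈ Icc 1 ((p - 1) / 2),
        1 / 2 * (zmodHarmonic p 1 (2 * k) ^ 2 * ((2 * k - 1 : ℕ) : ZMod p)⁻¹)) := by
    refine RatReduces.sum fun k hk ↦ ?_
    rw [mem_Icc] at hk
    have hm0 := ZMod.natCast_ne_zero_of_lt (p := p) (k := 2 * k - 1) (by omega) (by omega)
    have hk0 := ZMod.natCast_ne_zero_of_lt (p := p) (k := k) (by omega) (by omega)
    have hm : ((2 * k - 1 : ℕ) : ZMod p) = 2 * k - 1 := by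
      rw [Nat.cast_sub (by omega)]
      push_cast
      rfl
    have P := RatReduces.natCast (p := p) p
    have K := RatReduces.natCast (p := p) k
    rw [hm] at hm0 ⊢
    have hden : ((p : ZMod p) + 1 - 2 * k) * (p + 2 * k) ≠ 0 := by
      rw [hp0, zero_add, zero_add, ← neg_sub]
      exact mul_ne_zero (neg_ne_zero.2 hm0) (mul_ne_zero h2 hk0)
    have h := (((P.div two h2).sub K).mul
      ((ratReduces_harmonic (p := p) (n := 2 * k) (by omega)).pow 2)).div
        (((P.add one).sub (two.mul K)).mul (P.add (two.mul K))) hden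
    convert h using 1
    rw [eq_div_iff hden, hp0]
    field_simp
    ring
  have hmain := three_mul_harmonic_sum_eq hp3 hq hβ
  refine hleft.ratCongr_one ?_
  convert hright using 1
  rw [← mul_sum]
  generalize ∑ k ∈ Icc 1 ((p - 1) / 2), zmodHarmonic p 1 (2 * k) ^ 2 * _ = S at hmain ⊢
  field_simp
  linear_combination 6 * hmain
end

section
/- Let p > 3 be a prime. Then ∑_{k=1}^{(p-1)/2} (p/2 - k)·H(2;2k)/((p+1-2k)(p+2k)) ≡ q_p(2) - (3/16)·B_{p-3} modulo p (as rational numbers). -/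
/-- The generalized harmonic number of order 2: `H(2;n) = ∑_{j=1}^n 1/j^2`. -/
def harmonic2 (n : ℕ) : ℚ := ∑ j ∈ Finset.Icc 1 n, 1 / (j : ℚ) ^ 2
open Finset

/-- The rational `x` is `p`-integral and its residue class modulo `p` is `y`. -/
def ReducesTo (p : ℕ) [Fact p.Prime] (x : ℚ) (y : ZMod p) : Prop :=
  ∃ n d : ℤ, (d : ZMod p) ≠ 0 ∧ x = n / d ∧ y = n / d

namespace ReducesTo

variable {p : ℕ} [Fact p.Prime] {x x' : ℚ} {y y' : ZMod p}

theorem intCast_rat_ne_zero {d : ℤ} (hd : (d : ZMod p) ≠ 0) : (d : ℚ) ≠ 0 := by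
  rintro h
  apply hd
  rw [Int.cast_eq_zero.mp h, Int.cast_zero]

theorem intCast (n : ℤ) : ReducesTo p n n := ⟨n, 1, by simp, by simp, by simp⟩

theorem natCast (n : ℕ) : ReducesTo p n n := by simpa using intCast (p := p) n

theorem add (h : ReducesTo p x y) (h' : ReducesTo p x' y') : ReducesTo p (x + x') (y + y') := by
  obtain ⟨n, d, hd, rfl, rfl⟩ := h
  obtain ⟨n', d', hd', rfl, rfl⟩ := h'
  have := intCast_rat_ne_zero hd
  have := intCast_rat_ne_zero hd'
  refine ⟨n * d' + d * n', d * d', by simp [hd, hd'], ?_, ?_⟩ <;> push_cast <;> field_simp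

theorem mul (h : ReducesTo p x y) (h' : ReducesTo p x' y') : ReducesTo p (x * x') (y * y') := by
  obtain ⟨n, d, hd, rfl, rfl⟩ := h
  obtain ⟨n', d', hd', rfl, rfl⟩ := h'
  refine ⟨n * n', d * d', by simp [hd, hd'], ?_, ?_⟩ <;> push_cast <;> rw [div_mul_div_comm]

theorem neg (h : ReducesTo p x y) : ReducesTo p (-x) (-y) := by
  simpa using (intCast (p := p) (-1)).mul h

theorem sub (h : ReducesTo p x y) (h' : ReducesTo p x' y') : ReducesTo p (x - x') (y - y') := by
  simpa [sub_eq_add_neg] using h.add h'.neg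

theorem inv (h : ReducesTo p x y) (hy : y ≠ 0) : ReducesTo p x⁻¹ y⁻¹ := by
  obtain ⟨n, d, hd, rfl, rfl⟩ := h
  exact ⟨d, n, fun hn => hy (by simp [hn]), by simp, by simp⟩

theorem div (h : ReducesTo p x y) (h' : ReducesTo p x' y') (hy : y' ≠ 0) :
    ReducesTo p (x / x') (y / y') := by
  simpa [div_eq_mul_inv] using h.mul (h'.inv hy)

theorem pow (h : ReducesTo p x y) (n : ℕ) : ReducesTo p (x ^ n) (y ^ n) := by
  induction n with
  | zero => simpa using natCast (p := p) 1
  | succ n ih => simpa [pow_succ] using ih.mul h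

theorem sum {ι : Type*} {s : Finset ι} {f : ι → ℚ} {g : ι → ZMod p}
    (h : ∀ i ∈ s, ReducesTo p (f i) (g i)) : ReducesTo p (∑ i ∈ s, f i) (∑ i ∈ s, g i) := by
  classical
  induction s using Finset.induction_on with
  | empty => simpa using natCast (p := p) 0
  | insert a s ha ih =>
    rw [sum_insert ha, sum_insert ha]
    exact (h a (mem_insert_self a s)).add (ih fun i hi => h i (mem_insert_of_mem hi))

theorem unique (h : ReducesTo p x y) (h' : ReducesTo p x y') : y = y' := by
  obtain ⟨n, d, hd, rfl, rfl⟩ := h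
  obtain ⟨n', d', hd', hx, rfl⟩ := h'
  rw [div_eq_div_iff (intCast_rat_ne_zero hd) (intCast_rat_ne_zero hd')] at hx
  rw [div_eq_div_iff hd hd']
  exact_mod_cast congrArg (Int.cast : ℤ → ZMod p) (by exact_mod_cast hx : n * d' = n' * d)

protected theorem ratCongr (h : ReducesTo p x y) (h' : ReducesTo p x' y) :
    _root_.ratCongr p 1 x x' := by
  have hsub := h.sub h'
  rw [sub_self] at hsub
  obtain ⟨n, d, hd, hx, hn⟩ := hsub
  have hn0 : (n : ZMod p) = 0 := by simpa [hd] using hn.symm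
  obtain ⟨c, rfl⟩ := (ZMod.intCast_zmod_eq_zero_iff_dvd n p).mp hn0
  refine ⟨c / d, by rw [hx]; push_cast; ring, fun hdvd => hd ?_⟩
  rw [← Rat.divInt_eq_div] at hdvd
  rw [ZMod.intCast_zmod_eq_zero_iff_dvd]
  exact (Int.natCast_dvd_natCast.mpr hdvd).trans (Rat.den_dvd c d)

end ReducesTo

section
variable {p : ℕ} [Fact p.Prime]

theorem ZMod.natCast_ne_zero_of_lt_s8 {n : ℕ} (h0 : 0 < n) (hn : n < p) : (n : ZMod p) ≠ 0 := by
  rw [Ne, ZMod.natCast_eq_zero_iff]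
  exact Nat.not_dvd_of_pos_of_lt h0 hn

theorem ZMod.sum_range_pow_eq_zero {s : ℕ} (hs : s < p - 1) :
    ∑ j ∈ range p, (j : ZMod p) ^ s = 0 := by
  have h := FiniteField.sum_pow_lt_card_sub_one (ZMod p) s (by rwa [ZMod.card])
  rw [← h]
  refine sum_bij' (fun j _ => (j : ZMod p)) (fun x _ => x.val) ?_ ?_ ?_ ?_ ?_
  · simp
  · intro x _
    simpa using ZMod.val_lt x
  · intro j hj
    exact ZMod.val_cast_of_lt (by simpa using hj)
  · simp
  · simp

theorem ZMod.natCast_choose_pred {j : ℕ} (hj : j < p) : ((p - 1).choose j : ZMod p) = (-1) ^ j := by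
  induction j with
  | zero => simp
  | succ j ih =>
    have hp := (Fact.out : p.Prime)
    have h1 : p.choose (j + 1) = (p - 1).choose j + (p - 1).choose (j + 1) := by
      conv_lhs => rw [← Nat.sub_add_cancel hp.one_le]
      rw [Nat.choose_succ_succ]
    have h2 : ((p.choose (j + 1) : ℕ) : ZMod p) = 0 := by
      rw [ZMod.natCast_eq_zero_iff]
      exact hp.dvd_choose_self (by omega) hj
    rw [h1, Nat.cast_add, ih (by omega)] at h2
    rw [pow_succ]
    linear_combination h2

theorem two_mul_fermatQ (hp : p.Prime) :
    2 * fermatQ p = ∑ j ∈ range (p - 1), ((p - 1).choose j : ℚ) / (j + 1 : ℕ) := by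
  obtain ⟨n, rfl⟩ : ∃ n, p = n + 1 := ⟨p - 1, by have := hp.pos; omega⟩
  have hsum : ∑ j ∈ range n, ((n + 1).choose (j + 1) : ℚ) = 2 ^ (n + 1) - 2 := by
    have h : ((∑ j ∈ range (n + 1 + 1), (n + 1).choose j : ℕ) : ℚ) = 2 ^ (n + 1) := by
      rw [Nat.sum_range_choose]; norm_num
    rw [sum_range_succ, sum_range_succ'] at h
    push_cast at h
    simp at h
    linear_combination h
  have hn : ((n + 1 : ℕ) : ℚ) ≠ 0 := by positivity
  simp only [fermatQ, Nat.add_sub_cancel]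
  rw [← mul_right_inj' hn, mul_sum]
  have hterm : ∀ j ∈ range n, ((n + 1 : ℕ) : ℚ) * ((n.choose j : ℚ) / (j + 1 : ℕ))
      = (n + 1).choose (j + 1) := by
    intro j _
    have h : ((n + 1 : ℕ) : ℚ) * n.choose j = (n + 1).choose (j + 1) * (j + 1 : ℕ) := by
      exact_mod_cast Nat.add_one_mul_choose_eq n j
    have hj : ((j + 1 : ℕ) : ℚ) ≠ 0 := by positivity
    rw [← mul_div_assoc, h, mul_div_cancel_right₀ _ hj]
  rw [sum_congr rfl hterm, hsum]
  field_simp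
  ring

theorem reducesTo_fermatQ (hp2 : 2 < p) :
    ReducesTo p (fermatQ p) ((∑ j ∈ range (p - 1), (-1) ^ j / ((j + 1 : ℕ) : ZMod p)) / 2) := by
  have hp := (Fact.out : p.Prime)
  have h2 : ((2 : ℕ) : ZMod p) ≠ 0 := ZMod.natCast_ne_zero_of_lt_s8 two_pos hp2
  have key : ReducesTo p (2 * fermatQ p)
      (∑ j ∈ range (p - 1), (-1) ^ j / ((j + 1 : ℕ) : ZMod p)) := by
    rw [two_mul_fermatQ hp]
    refine ReducesTo.sum fun j hj => ?_
    rw [mem_range] at hj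
    rw [← ZMod.natCast_choose_pred (by omega : j < p)]
    exact (ReducesTo.natCast _).div (ReducesTo.natCast _)
      (ZMod.natCast_ne_zero_of_lt_s8 (by omega) (by omega))
  have h := key.div (ReducesTo.natCast 2) h2
  rw [Nat.cast_ofNat, mul_div_cancel_left₀ _ (two_ne_zero' ℚ)] at h
  exact_mod_cast h

theorem exists_reducesTo_bernoulli {r : ℕ} (hr : r + 1 < p) :
    ∃ y, ReducesTo p (bernoulli r) y := by
  induction r using Nat.strong_induction_on with
  | _ r ih =>
    have hr1 : ((r + 1 : ℕ) : ZMod p) ≠ 0 := ZMod.natCast_ne_zero_of_lt_s8 (by omega) hr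
    have hr1' : ((r + 1 : ℕ) : ℚ) ≠ 0 := by positivity
    choose! b hb using fun k (hk : k < r) => ih k hk (by omega)
    have h := _root_.sum_bernoulli (r + 1)
    rw [sum_range_succ, Nat.choose_succ_self_right] at h
    have hB : bernoulli r = ((if r + 1 = 1 then (1 : ℕ) else (0 : ℕ) : ℕ)
        - ∑ k ∈ range r, ((r + 1).choose k : ℚ) * bernoulli k) / (r + 1 : ℕ) := by
      rw [eq_div_iff hr1']
      push_cast at h ⊢
      linear_combination h
    rw [hB]
    exact ⟨_, ((ReducesTo.natCast _).sub (ReducesTo.sum fun k hk =>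
      (ReducesTo.natCast _).mul (hb k (mem_range.mp hk)))).div (ReducesTo.natCast _) hr1⟩

/-- Faulhaber's formula modulo `p`, for exponents below `p - 1`. -/
theorem ReducesTo.sum_range_pow {b : ℕ → ZMod p}
    (hb : ∀ r, r + 1 < p → ReducesTo p (bernoulli r) (b r)) {N : ℕ} (hN : N + 1 < p)
    {x : ℚ} {y : ZMod p} (hx : ReducesTo p x y) :
    ReducesTo p
      (∑ i ∈ range (N + 1), bernoulli i * (N + 1).choose i * x ^ (N + 1 - i) / (N + 1 : ℕ))
      (∑ i ∈ range (N + 1), b i * (N + 1).choose i * y ^ (N + 1 - i) / (N + 1 : ℕ)) := by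
  refine ReducesTo.sum fun i hi => ?_
  rw [mem_range] at hi
  exact (((hb i (by omega)).mul (natCast _)).mul (hx.pow _)).div (natCast _)
    (ZMod.natCast_ne_zero_of_lt_s8 (by omega) hN)

theorem ZMod.sum_range_pow_eq_sum_bernoulli {b : ℕ → ZMod p}
    (hb : ∀ r, r + 1 < p → ReducesTo p (bernoulli r) (b r)) {N : ℕ} (hN : N + 1 < p) (n : ℕ) :
    ∑ k ∈ range n, (k : ZMod p) ^ N =
      ∑ i ∈ range (N + 1), b i * (N + 1).choose i * (n : ZMod p) ^ (N + 1 - i) / (N + 1 : ℕ) := by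
  have h := ReducesTo.sum_range_pow hb hN (ReducesTo.natCast n)
  have h' : ReducesTo p (∑ k ∈ range n, (k : ℚ) ^ N) (∑ k ∈ range n, (k : ZMod p) ^ N) :=
    ReducesTo.sum fun k _ => (ReducesTo.natCast k).pow N
  refine h'.unique ?_
  rw [_root_.sum_range_pow]
  exact_mod_cast h

theorem sum_bernoulli_mul_half_pow (N : ℕ) :
    ∑ i ∈ range (N + 1), bernoulli i * (N + 1).choose i * (1 / 2 : ℚ) ^ (N + 1 - i) / (N + 1 : ℕ)
      = ((2 / 2 ^ (N + 1) - 1) * bernoulli (N + 1) - bernoulli (N + 1)) / (N + 1 : ℕ) := by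
  have h : (Polynomial.bernoulli (N + 1)).eval (1 / 2 : ℚ)
      = (2 / 2 ^ (N + 1) - 1) * bernoulli (N + 1) := by
    have h := bernoulliFun_eval_half (N + 1)
    rw [bernoulliFun] at h
    have hc : ((2 : ℝ)⁻¹) = algebraMap ℚ ℝ (1 / 2) := by simp
    rw [hc] at h
    rw [Polynomial.eval_map_algebraMap, Polynomial.aeval_algebraMap_apply] at h
    simp only [Polynomial.coe_aeval_eq_eval, eq_ratCast] at h
    have hinj : Function.Injective ((↑) : ℚ → ℝ) := Rat.cast_injective
    apply hinj
    rw [h]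
    push_cast
    rfl
  rw [← h, ← sum_div, Polynomial.bernoulli, Polynomial.eval_finsetSum, sum_range_succ _ (N + 1)]
  simp [Polynomial.eval_monomial]

theorem ZMod.sum_range_half_pow_eq {m : ℕ} (hpm : p = 2 * m + 1) (hm : 2 ≤ m) {β : ZMod p}
    (hβ : ReducesTo p (bernoulli (p - 3)) β) :
    ∑ f ∈ range m, ((f + 1 : ℕ) : ZMod p) ^ (p - 4) = -2 * β := by
  have h2 : (2 : ZMod p) ≠ 0 := by
    exact_mod_cast ZMod.natCast_ne_zero_of_lt_s8 (p := p) two_pos (by omega)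
  have h3 : (3 : ZMod p) ≠ 0 := by
    exact_mod_cast ZMod.natCast_ne_zero_of_lt_s8 (p := p) three_pos (by omega)
  have hp0 : (2 : ZMod p) * m + 1 = 0 := by
    have : ((2 * m + 1 : ℕ) : ZMod p) = 0 := by rw [← hpm, ZMod.natCast_self]
    exact_mod_cast this
  choose! b hb using fun r (hr : r + 1 < p) => exists_reducesTo_bernoulli (p := p) hr
  have hN : p - 4 + 1 = p - 3 := by omega
  have hsum := ZMod.sum_range_pow_eq_sum_bernoulli hb (N := p - 4) (by omega) (m + 1)
  have hhalf : ((m + 1 : ℕ) : ZMod p) = 1 / 2 := by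
    rw [eq_div_iff h2]; push_cast; linear_combination hp0
  have hone : ReducesTo p (1 / 2) (1 / 2) := by
    have := (ReducesTo.natCast (p := p) 1).div (ReducesTo.natCast 2) (by exact_mod_cast h2)
    exact_mod_cast this
  have hred := ReducesTo.sum_range_pow hb (N := p - 4) (by omega) hone
  rw [← hhalf, ← hsum, sum_bernoulli_mul_half_pow, hN] at hred
  have hpow : (2 : ZMod p) ^ (p - 3) * 4 = 1 := by
    have := ZMod.pow_card_sub_one_eq_one h2
    rw [show p - 1 = p - 3 + 2 by omega, pow_add] at this
    rw [← this]; norm_num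
  have hp3 : ((p - 3 : ℕ) : ZMod p) = -3 := by
    rw [Nat.cast_sub (by omega)]; simp
  have two := ReducesTo.natCast (p := p) 2
  have hval := ((((two.div (two.pow (p - 3)) (by exact_mod_cast pow_ne_zero _ h2)).sub
    (ReducesTo.natCast 1)).mul hβ).sub hβ).div (ReducesTo.natCast (p - 3))
      (by rw [hp3]; exact neg_ne_zero.mpr h3)
  push_cast at hval hred
  have heq := hred.unique hval
  rw [sum_range_succ'] at heq
  push_cast at heq ⊢
  rw [zero_pow (by omega), add_zero] at heq
  rw [heq, hp3, div_eq_iff (neg_ne_zero.mpr h3)]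
  have : (2 : ZMod p) / 2 ^ (p - 3) = 8 := by
    rw [div_eq_iff (pow_ne_zero _ h2)]; linear_combination -2 * hpow
  rw [this]; ring

theorem ZMod.sum_range_half_pow_eq_zero {m : ℕ} (hpm : p = 2 * m + 1) {s : ℕ} (hs : Even s)
    (hs0 : s ≠ 0) (hsp : s < p - 1) : ∑ f ∈ range m, ((f + 1 : ℕ) : ZMod p) ^ s = 0 := by
  have h2 : (2 : ZMod p) ≠ 0 := by
    exact_mod_cast ZMod.natCast_ne_zero_of_lt_s8 (p := p) two_pos (by omega)
  have h : ∑ j ∈ range (2 * m + 1), (j : ZMod p) ^ s = 0 := by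
    rw [← hpm, ZMod.sum_range_pow_eq_zero hsp]
  rw [sum_range_succ', two_mul, sum_range_add,
    ← sum_range_reflect (fun i => ((m + i + 1 : ℕ) : ZMod p) ^ s)] at h
  have hrefl : ∀ i ∈ range m, ((m + (m - 1 - i) + 1 : ℕ) : ZMod p) ^ s
      = ((i + 1 : ℕ) : ZMod p) ^ s := by
    intro i hi
    rw [mem_range] at hi
    rw [show m + (m - 1 - i) + 1 = p - (i + 1) by omega, Nat.cast_sub (by omega), ZMod.natCast_self,
      zero_sub, hs.neg_pow]
  rw [sum_congr rfl hrefl] at h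
  simp only [Nat.cast_zero, zero_pow hs0, add_zero, ← two_mul] at h
  exact (mul_eq_zero.mp h).resolve_left h2

theorem ZMod.sum_range_sum_pow_div_even {m : ℕ} (hpm : p = 2 * m + 1) (hm : 2 ≤ m) {β : ZMod p}
    (hβ : ReducesTo p (bernoulli (p - 3)) β) :
    ∑ f ∈ range m, (∑ j ∈ range (2 * (f + 1)), (j : ZMod p) ^ (p - 3)) / (2 * (f + 1) : ℕ)
      = -(3 / 8) * β := by
  have h2 : (2 : ZMod p) ≠ 0 := by
    exact_mod_cast ZMod.natCast_ne_zero_of_lt_s8 (p := p) two_pos (by omega)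
  have hp0 : (2 : ZMod p) * m + 1 = 0 := by
    have : ((2 * m + 1 : ℕ) : ZMod p) = 0 := by rw [← hpm, ZMod.natCast_self]
    exact_mod_cast this
  choose! b hb using fun r (hr : r + 1 < p) => exists_reducesTo_bernoulli (p := p) hr
  have hN : p - 3 + 1 = p - 2 := by omega
  have hp2 : ((p - 2 : ℕ) : ZMod p) ≠ 0 := ZMod.natCast_ne_zero_of_lt_s8 (by omega) (by omega)
  have hswap : ∑ f ∈ range m,
      (∑ j ∈ range (2 * (f + 1)), (j : ZMod p) ^ (p - 3)) / (2 * (f + 1) : ℕ) =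
      ∑ i ∈ range (p - 3 + 1), b i * (p - 2).choose i * 2 ^ (p - 3 - i) / (p - 2 : ℕ) *
        ∑ f ∈ range m, ((f + 1 : ℕ) : ZMod p) ^ (p - 3 - i) := by
    simp only [mul_sum]
    rw [sum_comm]
    refine sum_congr rfl fun f hf => ?_
    rw [mem_range] at hf
    have hf0 : ((2 * (f + 1) : ℕ) : ZMod p) ≠ 0 :=
      ZMod.natCast_ne_zero_of_lt_s8 (by omega) (by omega)
    rw [ZMod.sum_range_pow_eq_sum_bernoulli hb (by omega), sum_div, hN]
    refine sum_congr rfl fun i hi => ?_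
    rw [mem_range] at hi
    rw [show p - 2 - i = (p - 3 - i) + 1 by omega, pow_succ, div_eq_iff hf0]
    push_cast
    rw [mul_pow]
    ring
  have hzero : ∀ i ∈ range (p - 3), i ≠ 1 →
      b i * (p - 2).choose i * 2 ^ (p - 3 - i) / (p - 2 : ℕ) *
        ∑ f ∈ range m, ((f + 1 : ℕ) : ZMod p) ^ (p - 3 - i) = 0 := by
    intro i hi hi1
    rw [mem_range] at hi
    rcases Nat.even_or_odd i with he | ho
    · rw [ZMod.sum_range_half_pow_eq_zero hpm _ (by omega) (by omega), mul_zero]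
      obtain ⟨t, rfl⟩ := he
      exact ⟨m - 1 - t, by omega⟩
    · have h0 := hb i (by omega)
      rw [bernoulli_eq_zero_of_odd ho (by obtain ⟨t, rfl⟩ := ho; omega)] at h0
      have : b i = 0 := h0.unique (by exact_mod_cast ReducesTo.natCast (p := p) 0)
      simp [this]
  have hb1 : b 1 = -1 / 2 := by
    have h := ((ReducesTo.natCast (p := p) 1).neg).div (ReducesTo.natCast 2) (by exact_mod_cast h2)
    have h' := hb 1 (by omega)
    rw [bernoulli_one] at h'
    push_cast at h
    exact h'.unique h
  have hbp : b (p - 3) = β := (hb _ (by omega)).unique hβ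
  have hpow : (2 : ZMod p) ^ (p - 4) * 8 = 1 := by
    have := ZMod.pow_card_sub_one_eq_one h2
    rw [show p - 1 = p - 4 + 3 by omega, pow_add] at this
    rw [← this]; norm_num
  have hchoose : (p - 2).choose (p - 3) = p - 2 := by
    rw [← hN, Nat.choose_succ_self_right]
  rw [hswap, sum_range_succ, sum_eq_single_of_mem 1 (by rw [mem_range]; omega) hzero, hb1, hbp,
    hchoose, Nat.choose_one_right, show p - 3 - 1 = p - 4 by omega,
    ZMod.sum_range_half_pow_eq hpm hm hβ]
  simp only [Nat.sub_self, pow_zero, sum_const, card_range, nsmul_eq_mul, mul_one]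
  rw [mul_div_right_comm, mul_div_cancel_right₀ _ hp2, mul_div_cancel_right₀ _ hp2]
  have h8 : (8 : ZMod p) ≠ 0 := right_ne_zero_of_mul_eq_one hpow
  have hpow' : (2 : ZMod p) ^ (p - 4) = 1 / 8 := by rw [eq_div_iff h8, hpow]
  have hm' : (m : ZMod p) = -1 / 2 := by rw [eq_div_iff h2]; linear_combination hp0
  rw [hpow', hm']
  have e8 : (8 : ZMod p) = 2 ^ 3 := by norm_num
  rw [e8]
  field_simp
  ring

theorem ZMod.pow_sub_three_eq {x : ZMod p} (hp3 : 3 ≤ p) (hx : x ≠ 0) :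
    x ^ (p - 3) = 1 / x ^ 2 := by
  rw [eq_div_iff (pow_ne_zero 2 hx), ← pow_add, show p - 3 + 2 = p - 1 by omega,
    ZMod.pow_card_sub_one_eq_one hx]

theorem Finset.sum_Icc_one_eq_sum_range {M : Type*} [AddCommMonoid M] (g : ℕ → M) (n : ℕ) :
    ∑ k ∈ Icc 1 n, g k = ∑ k ∈ range n, g (k + 1) := by
  rw [range_eq_Ico, sum_Ico_add' g 0 n 1]
  rfl

theorem reducesTo_harmonic2 (hp3 : 3 < p) {n : ℕ} (hn : n < p) :
    ReducesTo p (harmonic2 n) (∑ j ∈ range (n + 1), (j : ZMod p) ^ (p - 3)) := by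
  rw [harmonic2, sum_Icc_one_eq_sum_range, sum_range_succ', Nat.cast_zero, zero_pow (by omega),
    add_zero]
  refine ReducesTo.sum fun j hj => ?_
  rw [mem_range] at hj
  have hj0 : ((j + 1 : ℕ) : ZMod p) ≠ 0 := ZMod.natCast_ne_zero_of_lt_s8 (by omega) (by omega)
  rw [ZMod.pow_sub_three_eq hp3.le hj0]
  exact_mod_cast (ReducesTo.natCast 1).div ((ReducesTo.natCast (j + 1)).pow 2) (pow_ne_zero 2 hj0)

theorem ZMod.sum_range_sub_pow_eq_neg {s : ℕ} (hs : Even s) (hs0 : s ≠ 0) (hsp : s < p - 1)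
    {n : ℕ} (hn : n < p) :
    ∑ j ∈ range (p - n), (j : ZMod p) ^ s = -∑ j ∈ range (n + 1), (j : ZMod p) ^ s := by
  induction n with
  | zero => simp [ZMod.sum_range_pow_eq_zero hsp, hs0]
  | succ n ih =>
    have h := ih (by omega)
    rw [show p - n = p - (n + 1) + 1 by omega, sum_range_succ, Nat.cast_sub hn.le,
      ZMod.natCast_self, zero_sub, hs.neg_pow] at h
    rw [sum_range_succ _ (n + 1)]
    linear_combination h

theorem sum_range_two_mul_alternating {K : Type*} [Field K] (g : ℕ → K) (m : ℕ) :
    ∑ j ∈ range (2 * m), (-1) ^ j / g j = ∑ f ∈ range m, (1 / g (2 * f) - 1 / g (2 * f + 1)) := by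
  induction m with
  | zero => simp
  | succ m ih =>
    rw [mul_add, mul_one, sum_range_succ, sum_range_succ, ih, sum_range_succ]
    simp [pow_succ, pow_mul]
    ring

theorem sum_range_two_mul_eq_add {M : Type*} [AddCommMonoid M] (g : ℕ → M) (m : ℕ) :
    ∑ j ∈ range (2 * m), g j = ∑ f ∈ range m, g (2 * f) + ∑ f ∈ range m, g (2 * f + 1) := by
  induction m with
  | zero => simp
  | succ m ih =>
    rw [mul_add, mul_one, sum_range_succ, sum_range_succ, ih, sum_range_succ, sum_range_succ]
    abel

theorem ZMod.sum_range_odd_pow_eq_zero {m : ℕ} (hpm : p = 2 * m + 1) {s : ℕ} (hs : Even s)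
    (hs0 : s ≠ 0) (hsp : s < p - 1) : ∑ f ∈ range m, ((2 * f + 1 : ℕ) : ZMod p) ^ s = 0 := by
  have h : ∑ j ∈ range (2 * m + 1), (j : ZMod p) ^ s = 0 := by
    rw [← hpm, ZMod.sum_range_pow_eq_zero hsp]
  rw [sum_range_succ', sum_range_two_mul_eq_add] at h
  have heven : ∑ f ∈ range m, ((2 * f + 1 + 1 : ℕ) : ZMod p) ^ s = 0 := by
    rw [← mul_zero ((2 : ZMod p) ^ s), ← ZMod.sum_range_half_pow_eq_zero hpm hs hs0 hsp, mul_sum]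
    refine sum_congr rfl fun f _ => ?_
    rw [← mul_pow]
    push_cast
    ring
  rwa [heven, add_zero, Nat.cast_zero, zero_pow hs0, add_zero] at h

/-- Evaluation in `ZMod p` of the sum of `H(2; 2k) / (2k - 1)`. -/
theorem ZMod.sum_range_sum_pow_div_odd {m : ℕ} (hpm : p = 2 * m + 1) (hm : 2 ≤ m) {β : ZMod p}
    (hβ : ReducesTo p (bernoulli (p - 3)) β) :
    ∑ f ∈ range m, (∑ j ∈ range (2 * (f + 1) + 1), (j : ZMod p) ^ (p - 3)) / (2 * f + 1 : ℕ)
      = ∑ j ∈ range (p - 1), (-1) ^ j / ((j + 1 : ℕ) : ZMod p) - 3 / 8 * β := by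
  have hs : Even (p - 3) := ⟨m - 1, by omega⟩
  rw [← sum_range_reflect]
  have hterm : ∀ f ∈ range m,
      (∑ j ∈ range (2 * (m - 1 - f + 1) + 1), (j : ZMod p) ^ (p - 3)) / (2 * (m - 1 - f) + 1 : ℕ)
      = (∑ j ∈ range (2 * (f + 1)), (j : ZMod p) ^ (p - 3)) / (2 * (f + 1) : ℕ)
        - ((2 * f + 1 : ℕ) : ZMod p) ^ (p - 3)
        + (1 / ((2 * f + 1 : ℕ) : ZMod p) - 1 / ((2 * f + 1 + 1 : ℕ) : ZMod p)) := by
    intro f hf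
    rw [mem_range] at hf
    have h1 : ((2 * f + 1 : ℕ) : ZMod p) ≠ 0 := ZMod.natCast_ne_zero_of_lt_s8 (by omega) (by omega)
    have h2 : ((2 * f + 1 + 1 : ℕ) : ZMod p) ≠ 0 :=
      ZMod.natCast_ne_zero_of_lt_s8 (by omega) (by omega)
    rw [show 2 * (m - 1 - f + 1) + 1 = p - 2 * f by omega,
      ZMod.sum_range_sub_pow_eq_neg hs (by omega) (by omega) (by omega),
      show 2 * (m - 1 - f) + 1 = p - (2 * f + 1 + 1) by omega, Nat.cast_sub (by omega),
      ZMod.natCast_self, zero_sub, neg_div_neg_eq, show 2 * (f + 1) = 2 * f + 1 + 1 by ring,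
      sum_range_succ _ (2 * f + 1), ZMod.pow_sub_three_eq (by omega) h1]
    rw [Nat.cast_succ (2 * f + 1)] at h2 ⊢
    field_simp
    ring
  rw [sum_congr rfl hterm, sum_add_distrib, sum_sub_distrib,
    ZMod.sum_range_sum_pow_div_even hpm hm hβ,
    ZMod.sum_range_odd_pow_eq_zero hpm hs (by omega) (by omega), show p - 1 = 2 * m by omega,
    sum_range_two_mul_alternating (fun j => ((j + 1 : ℕ) : ZMod p))]
  ring

end

theorem sum_H2_2k_congr (p : ℕ) (hp : p.Prime) (hp3 : 3 < p) :
    ratCongr p 1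
      (∑ k ∈ Finset.Icc 1 ((p - 1) / 2),
        ((p : ℚ) / 2 - k) * harmonic2 (2 * k) / (((p : ℚ) + 1 - 2 * k) * ((p : ℚ) + 2 * k)))
      (fermatQ p - (3 / 16) * bernoulli (p - 3)) := by
  have : Fact p.Prime := ⟨hp⟩
  obtain ⟨m, hpm⟩ : ∃ m, p = 2 * m + 1 := hp.odd_of_ne_two (by omega)
  have hm : 2 ≤ m := by omega
  obtain ⟨β, hβ⟩ := exists_reducesTo_bernoulli (p := p) (r := p - 3) (by omega)
  have h2 : (2 : ZMod p) ≠ 0 := by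
    exact_mod_cast ZMod.natCast_ne_zero_of_lt_s8 (p := p) two_pos (by omega)
  have h16 : (16 : ZMod p) ≠ 0 := by
    rw [show (16 : ZMod p) = 2 ^ 4 by norm_num]
    exact pow_ne_zero 4 h2
  have hrhs := (reducesTo_fermatQ (by omega)).sub
    (((ReducesTo.natCast 3).div (ReducesTo.natCast 16) (by exact_mod_cast h16)).mul hβ)
  have hval : (∑ j ∈ range (p - 1), (-1) ^ j / ((j + 1 : ℕ) : ZMod p)) / 2
      - ((3 : ℕ) : ZMod p) / ((16 : ℕ) : ZMod p) * β
      = (∑ f ∈ range m, (∑ j ∈ range (2 * (f + 1) + 1), (j : ZMod p) ^ (p - 3))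
        / (2 * f + 1 : ℕ)) / 2 := by
    rw [ZMod.sum_range_sum_pow_div_odd hpm hm hβ]
    push_cast
    rw [show (16 : ZMod p) = 8 * 2 by norm_num, ← div_div]
    ring
  rw [hval] at hrhs
  refine ReducesTo.ratCongr (p := p) ?_ (by exact_mod_cast hrhs)
  rw [show (p - 1) / 2 = m by omega, sum_Icc_one_eq_sum_range, sum_div]
  refine ReducesTo.sum fun f hf => ?_
  rw [mem_range] at hf
  have h1 : ((2 * f + 1 : ℕ) : ZMod p) ≠ 0 := ZMod.natCast_ne_zero_of_lt_s8 (by omega) (by omega)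
  have hf1 : ((f + 1 : ℕ) : ZMod p) ≠ 0 := ZMod.natCast_ne_zero_of_lt_s8 (by omega) (by omega)
  have two := ReducesTo.natCast (p := p) 2
  have hP := ReducesTo.natCast (p := p) p
  have hk := ReducesTo.natCast (p := p) (f + 1)
  have hden : ((p : ZMod p) + (1 : ℕ) - (2 : ℕ) * (f + 1 : ℕ)) * (p + (2 : ℕ) * (f + 1 : ℕ))
      = -((2 * f + 1 : ℕ) : ZMod p) * (2 * (f + 1 : ℕ)) := by
    rw [ZMod.natCast_self]
    push_cast
    ring
  have hne : -((2 * f + 1 : ℕ) : ZMod p) * (2 * (f + 1 : ℕ)) ≠ 0 :=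
    mul_ne_zero (neg_ne_zero.mpr h1) (mul_ne_zero h2 hf1)
  have hterm := (((hP.div two (by exact_mod_cast h2)).sub hk).mul
    (reducesTo_harmonic2 hp3 (n := 2 * (f + 1)) (by omega))).div
    (((hP.add (ReducesTo.natCast 1)).sub (two.mul hk)).mul (hP.add (two.mul hk)))
    (by rw [hden]; exact hne)
  rw [hden, ZMod.natCast_self, zero_div, zero_sub] at hterm
  convert hterm using 1
  · push_cast
    ring
  · field_simp
    push_cast
    rfl
end

section
/- Define, for integers n ≥ 0 and k ≥ 0, the rational numbers F(n,k) = (6n-2k+1)/2^{8n-2k} · C(2n,n)·C(2n+2k,n+k)·C(2n-2k,n-k)·C(n+k,n) / C(2k,k) if n ≥ k and F(n,k) = 0 if n < k, and G(n,k) = n^2·C(2n,n)·C(2n+2k,n+k)·C(2n-2k,n-k)·C(n+k,n) / (2^{8n-2k-4}·(2n+2k-1)·C(2k,k)) if n ≥ k and (n,k) ≠ (0,0), with G(n,k) = 0 if n < k. Then for all integers n ≥ 0 and k ≥ 1, F(n,k-1) - F(n,k) = G(n+1,k) - G(n,k). -/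
/-- The WZ-pair function `F(n,k)`; it vanishes for `n < k`. -/
def F (n k : ℕ) : ℚ :=
  if k ≤ n then
    (6 * (n : ℚ) - 2 * k + 1) / 2 ^ (8 * n - 2 * k) *
      (((2 * n).choose n : ℚ) * ((2 * n + 2 * k).choose (n + k)) *
        ((2 * n - 2 * k).choose (n - k)) * ((n + k).choose n)) /
      ((2 * k).choose k)
  else 0

/-- The WZ-pair function `G(n,k)`; it vanishes for `n < k` (and we also set
`G(0,0) = 0`, a value never used). -/
def G (n k : ℕ) : ℚ :=
  if k ≤ n ∧ (n, k) ≠ (0, 0) then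
    (n : ℚ) ^ 2 *
      (((2 * n).choose n : ℚ) * ((2 * n + 2 * k).choose (n + k)) *
        ((2 * n - 2 * k).choose (n - k)) * ((n + k).choose n)) /
      (2 ^ (8 * n - 2 * k - 4) * (2 * (n : ℚ) + 2 * k - 1) * ((2 * k).choose k))
  else 0

theorem centralBinom_succ_eq_div (n : ℕ) :
    ((n + 1).centralBinom : ℚ) = 2 * (2 * n + 1) / (n + 1) * n.centralBinom := by
  have h : ((n : ℚ) + 1) * (n + 1).centralBinom = 2 * (2 * n + 1) * n.centralBinom := by
    exact_mod_cast Nat.succ_mul_centralBinom_succ n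
  field_simp
  linarith

theorem choose_add_succ_eq_div (n k : ℕ) :
    ((n + (k + 1)).choose n : ℚ) = (n + k + 1) / (k + 1) * (n + k).choose n := by
  have h : ((n : ℚ) + k + 1) * (n + k).choose n = (n + (k + 1)).choose n * (k + 1) := by
    have h := Nat.add_one_mul_choose_eq (n + k) k
    rw [← Nat.choose_symm_add, show n + k + 1 = n + (k + 1) by ring, ← Nat.choose_symm_add] at h
    exact_mod_cast h
  field_simp
  linarith

theorem succ_add_choose_eq_div (n k : ℕ) :
    ((n + 1 + k).choose (n + 1) : ℚ) = (n + k + 1) / (n + 1) * (n + k).choose n := by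
  have h : ((n : ℚ) + k + 1) * (n + k).choose n = (n + 1 + k).choose (n + 1) * (n + 1) := by
    rw [show n + 1 + k = n + k + 1 by ring]
    exact_mod_cast Nat.add_one_mul_choose_eq (n + k) n
  field_simp
  linarith

/-- `F` on the region `k ≤ n`, parametrised by `m = n - k`. -/
theorem F_add (m k : ℕ) :
    F (m + k) k = (6 * (m : ℚ) + 4 * k + 1) / 2 ^ (8 * m + 6 * k) *
      ((m + k).centralBinom * (m + k + k).centralBinom * m.centralBinom *
        (m + k + k).choose (m + k)) / k.centralBinom := by
  rw [F, if_pos (Nat.le_add_left k m), show 8 * (m + k) - 2 * k = 8 * m + 6 * k by omega,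
    show 2 * (m + k) - 2 * k = 2 * m by omega, show m + k - k = m by omega,
    show 2 * (m + k) + 2 * k = 2 * (m + k + k) by ring]
  simp only [Nat.centralBinom]
  push_cast
  ring

/-- `G` on the region `1 ≤ k ≤ n`, parametrised by `m = n - k`. -/
theorem G_add (m k : ℕ) (hk : 1 ≤ k) :
    G (m + k) k = 16 * ((m : ℚ) + k) ^ 2 *
      ((m + k).centralBinom * (m + k + k).centralBinom * m.centralBinom *
        (m + k + k).choose (m + k)) /
      (2 ^ (8 * m + 6 * k) * (2 * (m : ℚ) + 4 * k - 1) * k.centralBinom) := by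
  have hpow : (2 : ℚ) ^ (8 * m + 6 * k) = 16 * 2 ^ (8 * m + 6 * k - 4) := by
    rw [show (16 : ℚ) = 2 ^ 4 by norm_num, ← pow_add]
    congr 1
    omega
  rw [G, if_pos ⟨Nat.le_add_left k m, by simp; omega⟩, hpow,
    show 8 * (m + k) - 2 * k - 4 = 8 * m + 6 * k - 4 by omega,
    show 2 * (m + k) - 2 * k = 2 * m by omega, show m + k - k = m by omega,
    show 2 * (m + k) + 2 * k = 2 * (m + k + k) by ring]
  simp only [← Nat.centralBinom_eq_two_mul_choose]
  push_cast
  rw [show 2 * ((m : ℚ) + k) + 2 * k - 1 = 2 * m + 4 * k - 1 by ring, mul_assoc 16, mul_assoc 16,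
    mul_assoc 16, mul_div_mul_left _ _ (by norm_num)]

theorem F_self_eq_G_succ_self (n : ℕ) : F n n = G (n + 1) (n + 1) := by
  have hF := F_add 0 n
  have hG := G_add 0 (n + 1) (by omega)
  simp only [zero_add] at hF hG
  have hE : (n.centralBinom : ℚ) ≠ 0 := by exact_mod_cast n.centralBinom_ne_zero
  rw [hF, hG, show n + 1 + (n + 1) = n + n + 1 + 1 by ring, centralBinom_succ_eq_div (n + n + 1),
    centralBinom_succ_eq_div (n + n), centralBinom_succ_eq_div n,
    show n + n + 1 + 1 = n + 1 + (n + 1) by ring, choose_add_succ_eq_div (n + 1) n,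
    succ_add_choose_eq_div n n]
  have h : 4 * (n : ℚ) + 3 ≠ 0 := by positivity
  have h' : 2 * (n : ℚ) + 1 ≠ 0 := by positivity
  push_cast
  rw [show 2 * (0 : ℚ) + 4 * (n + 1) - 1 = 4 * n + 3 by ring,
    show 8 * 0 + 6 * (n + 1) = 8 * 0 + 6 * n + 6 by ring, pow_add]
  field_simp
  ring

/-- The identity in the interior region, with `n = m + j + 1` and `k = j + 1`. -/
theorem F_sub_F_eq_G_sub_G (m j : ℕ) :
    F (m + 1 + j) j - F (m + (j + 1)) (j + 1) =
      G (m + 1 + (j + 1)) (j + 1) - G (m + (j + 1)) (j + 1) := by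
  rw [F_add, F_add, G_add _ _ (by omega), G_add _ _ (by omega)]
  have hE : (j.centralBinom : ℚ) ≠ 0 := by exact_mod_cast j.centralBinom_ne_zero
  have hn : m + 1 + j = m + (j + 1) := by ring
  have hn' : m + 1 + (j + 1) = m + (j + 1) + 1 := by ring
  rw [hn', hn]
  have hm : (m : ℚ) + (j + 1) = ((m + (j + 1) : ℕ) : ℚ) := by push_cast; ring
  generalize hN : m + (j + 1) = n at *
  rw [succ_add_choose_eq_div n (j + 1), choose_add_succ_eq_div n j,
    show n + 1 + (j + 1) = n + j + 1 + 1 by ring, show n + (j + 1) = n + j + 1 by ring,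
    centralBinom_succ_eq_div (n + j + 1), centralBinom_succ_eq_div (n + j),
    centralBinom_succ_eq_div n, centralBinom_succ_eq_div m, centralBinom_succ_eq_div j,
    show 8 * (m + 1) + 6 * j = 8 * m + 6 * j + 8 by ring,
    show 8 * m + 6 * (j + 1) = 8 * m + 6 * j + 6 by ring,
    show 8 * (m + 1) + 6 * (j + 1) = 8 * m + 6 * j + 14 by ring]
  simp only [pow_add _ (8 * m + 6 * j)]
  have hnq : (n : ℚ) = m + j + 1 := by rw [← hm]; ring
  push_cast
  rw [hnq, show 2 * ((m : ℚ) + 1) + 4 * (j + 1) - 1 = 2 * m + 4 * j + 5 by ring,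
    show 2 * (m : ℚ) + 4 * (j + 1) - 1 = 2 * m + 4 * j + 3 by ring]
  have h₁ : 2 * (m : ℚ) + 4 * j + 5 ≠ 0 := by positivity
  have h₂ : 2 * (m : ℚ) + 4 * j + 3 ≠ 0 := by positivity
  have h₃ : 2 * (j : ℚ) + 1 ≠ 0 := by positivity
  field_simp
  ring

theorem wz_pair_identity (n k : ℕ) (hk : 1 ≤ k) :
    F n (k - 1) - F n k = G (n + 1) k - G n k := by
  obtain ⟨j, rfl⟩ := Nat.exists_eq_add_of_le' hk
  rw [Nat.add_sub_cancel]
  rcases lt_trichotomy n j with h | rfl | h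
  · simp [F, G, show ¬ j ≤ n by omega, show ¬ j + 1 ≤ n by omega]
  · rw [F_self_eq_G_succ_self]
    simp [F, G]
  · obtain ⟨m, rfl⟩ := Nat.exists_eq_add_of_le' h
    have hmain := F_sub_F_eq_G_sub_G m j
    rwa [show m + 1 + j = m + (j + 1) by ring,
      show m + 1 + (j + 1) = m + (j + 1) + 1 by ring] at hmain
end

section
/- Let p > 3 be a prime. Then ∑_{k=1}^{(p-1)/2} 1/(k(2k-1)^2) ≡ -4·q_p(2) modulo p (as rational numbers). -/
open Finset

/-- `x : ℚ` is `p`-integral with residue `z`. -/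
def HasResidue (p : ℕ) (x : ℚ) (z : ZMod p) : Prop :=
  ∃ n d : ℤ, (d : ZMod p) ≠ 0 ∧ x * d = n ∧ z * d = n

namespace HasResidue

variable {p : ℕ} [Fact p.Prime] {x y : ℚ} {z w : ZMod p}

theorem intCast (m : ℤ) : HasResidue p m m := ⟨m, 1, by simp, by simp, by simp⟩

theorem add (hx : HasResidue p x z) (hy : HasResidue p y w) : HasResidue p (x + y) (z + w) := by
  obtain ⟨n, d, hd, hx, hz⟩ := hx
  obtain ⟨m, e, he, hy, hw⟩ := hy
  refine ⟨n * e + m * d, d * e, by simp [hd, he], ?_, ?_⟩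
  · push_cast; rw [← hx, ← hy]; ring
  · push_cast; rw [← hz, ← hw]; ring

theorem sub_intCast (hx : HasResidue p x z) (m : ℤ) : HasResidue p (x - m) (z - m) := by
  simpa [sub_eq_add_neg] using hx.add (intCast (-m))

theorem one_div_intCast {m : ℤ} (hm : (m : ZMod p) ≠ 0) : HasResidue p (1 / m) (1 / m) := by
  refine ⟨1, m, hm, ?_, ?_⟩
  · have : (m : ℚ) ≠ 0 := by rintro h; exact hm (by rw [Int.cast_eq_zero.mp h]; simp)
    field_simp; simp
  · field_simp; simp

theorem sum {ι : Type*} {s : Finset ι} {f : ι → ℚ} {g : ι → ZMod p}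
    (h : ∀ i ∈ s, HasResidue p (f i) (g i)) : HasResidue p (∑ i ∈ s, f i) (∑ i ∈ s, g i) := by
  classical
  induction s using Finset.induction_on with
  | empty => simpa using intCast (p := p) 0
  | insert a s ha ih =>
    rw [sum_insert ha, sum_insert ha]
    exact (h a (mem_insert_self a s)).add (ih fun i hi => h i (mem_insert_of_mem hi))

theorem exists_eq_mul (h : HasResidue p x 0) : ∃ c : ℚ, x = c * p ∧ ¬ p ∣ c.den := by
  obtain ⟨n, d, hd, hx, hz⟩ := h
  have hn : (p : ℤ) ∣ n := (ZMod.intCast_zmod_eq_zero_iff_dvd n p).mp (by simpa using hz.symm)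
  obtain ⟨m, rfl⟩ := hn
  have hd0 : (d : ℚ) ≠ 0 := by rintro h; exact hd (by rw [Int.cast_eq_zero.mp h]; simp)
  refine ⟨m / d, ?_, fun hdvd => hd ?_⟩
  · push_cast at hx; field_simp; linarith
  · rw [ZMod.intCast_zmod_eq_zero_iff_dvd]
    exact (Int.natCast_dvd_natCast.mpr hdvd).trans (by simpa [Rat.divInt_eq_div] using Rat.den_dvd m d)

end HasResidue

theorem sum_range_two_mul {M : Type*} [AddCommMonoid M] (f : ℕ → M) (n : ℕ) :
    ∑ j ∈ range (2 * n), f j = ∑ i ∈ range n, (f (2 * i) + f (2 * i + 1)) := by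
  induction n with
  | zero => simp
  | succ n ih => rw [mul_add_one, sum_range_succ, sum_range_succ, ih, sum_range_succ, add_assoc]

theorem one_div_mul_sq_eq {K : Type*} [Field K] {k m : K} (hk : 2 * k = m + 1) (hm : m ≠ 0)
    (hm1 : m + 1 ≠ 0) :
    1 / (k * (2 * k - 1) ^ 2) = 2 * (1 / m ^ 2) - 2 * (1 / m - 1 / (m + 1)) := by
  have h2k : 2 * k ≠ 0 := hk ▸ hm1
  have hk0 : k ≠ 0 := right_ne_zero_of_mul h2k
  rw [show 2 * k - 1 = m by rw [hk]; ring]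
  field_simp
  linear_combination -hk

namespace ZMod

variable {p : ℕ} [Fact p.Prime]

theorem natCast_ne_zero_of_lt_s14 {k : ℕ} (h0 : 0 < k) (hk : k < p) : (k : ZMod p) ≠ 0 := by
  rw [Ne, natCast_eq_zero_iff]
  exact Nat.not_dvd_of_pos_of_lt h0 hk

theorem natCast_choose_prime_sub_one {j : ℕ} (hj : j < p) :
    ((p - 1).choose j : ZMod p) = (-1) ^ j := by
  have hp : p.Prime := Fact.out
  induction j with
  | zero => simp
  | succ j ih =>
    have h : (p - 1).choose j + (p - 1).choose (j + 1) = p.choose (j + 1) := by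
      rw [← Nat.choose_succ_succ, Nat.succ_eq_add_one, Nat.sub_add_cancel hp.one_le]
    have h' := congrArg (Nat.cast (R := ZMod p)) h
    rw [(natCast_eq_zero_iff _ _).mpr (hp.dvd_choose_self j.succ_ne_zero hj), Nat.cast_add,
      ih (by omega)] at h'
    rw [pow_succ]
    linear_combination h'

/-- Twice the Fermat quotient of `2` is the alternating harmonic sum modulo `p`. -/
theorem two_mul_fermat_quotient {q : ℕ} (hq : 2 ^ (p - 1) = p * q + 1) :
    2 * (q : ZMod p) = ∑ j ∈ range (p - 1), (-1) ^ j / ((j : ZMod p) + 1) := by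
  have hp : p.Prime := Fact.out
  have h1 := hp.one_le
  have hc : ∀ j ∈ range (p - 1), p * (p.choose (j + 1) / p) = p.choose (j + 1) := fun j hj =>
    Nat.mul_div_cancel' (hp.dvd_choose_self j.succ_ne_zero (by have := mem_range.mp hj; omega))
  have hsum : 2 * q = ∑ j ∈ range (p - 1), p.choose (j + 1) / p := by
    apply Nat.eq_of_mul_eq_mul_left hp.pos
    rw [mul_sum, sum_congr rfl hc]
    have h := Nat.sum_range_choose p
    rw [sum_range_succ, sum_range_eq_add_Ico _ hp.pos, Nat.choose_self, Nat.choose_zero_right,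
      sum_Ico_eq_sum_range] at h
    have h2 : 2 ^ p = 2 ^ (p - 1) * 2 := by rw [← pow_succ, Nat.sub_add_cancel h1]
    simp only [add_comm 1] at h
    rw [h2, hq] at h
    linarith
  have hcast := congrArg (Nat.cast (R := ZMod p)) hsum
  push_cast at hcast
  rw [hcast]
  refine sum_congr rfl fun j hj => ?_
  have hj' : j + 1 < p := by have := mem_range.mp hj; omega
  have hne : (j : ZMod p) + 1 ≠ 0 := by exact_mod_cast natCast_ne_zero_of_lt_s14 j.succ_pos hj'
  rw [eq_div_iff hne, ← natCast_choose_prime_sub_one (by omega : j < p)]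
  have key : p.choose (j + 1) / p * (j + 1) = (p - 1).choose j := by
    apply Nat.eq_of_mul_eq_mul_left hp.pos
    rw [← mul_assoc, hc j hj]
    have := Nat.add_one_mul_choose_eq (p - 1) j
    rw [Nat.sub_add_cancel h1] at this
    exact this.symm
  exact_mod_cast congrArg (Nat.cast (R := ZMod p)) key

theorem sum_univ_eq_sum_range {M : Type*} [AddCommMonoid M] (f : ZMod p → M) :
    ∑ x, f x = ∑ i ∈ range p, f i := by
  refine sum_nbij' (fun x => x.val) (fun i => (i : ZMod p)) ?_ ?_ ?_ ?_ ?_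
  · intro x _; exact mem_range.mpr x.val_lt
  · simp
  · simp
  · intro i hi; exact val_cast_of_lt (mem_range.mp hi)
  · simp

theorem sum_one_div_sq (hp3 : 3 < p) :
    ∑ j ∈ range (p - 1), 1 / ((j : ZMod p) + 1) ^ 2 = 0 := by
  have h : ∑ x : ZMod p, x ^ 2 = 0 :=
    FiniteField.sum_pow_lt_card_sub_one _ 2 (by rw [ZMod.card]; omega)
  rw [← Equiv.sum_comp (Equiv.inv (ZMod p)), sum_univ_eq_sum_range,
    sum_range_eq_add_Ico _ (Fact.out : p.Prime).pos, sum_Ico_eq_sum_range] at h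
  simpa [add_comm] using h

theorem sum_one_div_odd_sq {n : ℕ} (hn : p = 2 * n + 1) (hp3 : 3 < p) :
    ∑ i ∈ range n, 1 / (2 * (i : ZMod p) + 1) ^ 2 = 0 := by
  have h := sum_one_div_sq hp3
  rw [show p - 1 = 2 * n by omega, sum_range_two_mul, sum_add_distrib] at h
  have hpn : 2 * (n : ZMod p) + 1 = 0 := by
    have : ((2 * n + 1 : ℕ) : ZMod p) = 0 := by rw [← hn, natCast_self]
    exact_mod_cast this
  have hreflect : ∑ i ∈ range n, 1 / (((2 * i + 1 : ℕ) : ZMod p) + 1) ^ 2 =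
      ∑ i ∈ range n, 1 / (2 * (i : ZMod p) + 1) ^ 2 := by
    rw [← sum_range_reflect]
    refine sum_congr rfl fun i hi => ?_
    obtain ⟨k, rfl⟩ := Nat.exists_eq_add_of_lt (mem_range.mp hi)
    rw [show i + k + 1 - 1 - i = k by omega]
    congr 1
    push_cast at hpn ⊢
    linear_combination (2 * (k : ZMod p) - 2 * i + 1) * hpn
  rw [hreflect] at h
  push_cast at h
  have h2 : (2 : ZMod p) ≠ 0 := by
    exact_mod_cast natCast_ne_zero_of_lt_s14 (p := p) (k := 2) (by omega) (by omega)
  exact (mul_eq_zero.mp ((two_mul _).trans h)).resolve_left h2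

theorem sum_one_div_mul_odd_sq {n q : ℕ} (hn : p = 2 * n + 1) (hp3 : 3 < p)
    (hq : 2 ^ (p - 1) = p * q + 1) :
    ∑ k ∈ Icc 1 n, 1 / ((k : ZMod p) * (2 * k - 1) ^ 2) = -4 * (q : ZMod p) := by
  have hterm : ∀ i ∈ range n, 1 / (((1 + i : ℕ) : ZMod p) * (2 * ((1 + i : ℕ) : ZMod p) - 1) ^ 2) =
      2 * (1 / (2 * (i : ZMod p) + 1) ^ 2) -
        2 * ((-1) ^ (2 * i) / (((2 * i : ℕ) : ZMod p) + 1) +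
          (-1) ^ (2 * i + 1) / (((2 * i + 1 : ℕ) : ZMod p) + 1)) := by
    intro i hi
    have hi' := mem_range.mp hi
    have h2 : 2 * (i : ZMod p) + 1 ≠ 0 := by
      exact_mod_cast natCast_ne_zero_of_lt_s14 (p := p) (k := 2 * i + 1) (by omega) (by omega)
    have h3 : 2 * (i : ZMod p) + 1 + 1 ≠ 0 := by
      exact_mod_cast natCast_ne_zero_of_lt_s14 (p := p) (k := 2 * i + 1 + 1) (by omega) (by omega)
    rw [pow_succ (-1 : ZMod p), pow_mul (-1 : ZMod p), neg_one_sq, one_pow]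
    push_cast
    rw [one_div_mul_sq_eq (by linear_combination : 2 * (1 + (i : ZMod p)) = 2 * i + 1 + 1) h2 h3]
    ring
  have hIcc : Icc 1 n = Ico 1 (n + 1) := by rfl
  rw [hIcc, sum_Ico_eq_sum_range, Nat.add_sub_cancel, sum_congr rfl hterm, sum_sub_distrib,
    ← mul_sum, ← mul_sum, sum_one_div_odd_sq hn hp3,
    ← sum_range_two_mul (fun j => (-1) ^ j / ((j : ZMod p) + 1)),
    show 2 * n = p - 1 by omega, ← two_mul_fermat_quotient hq]
  ring

end ZMod

theorem exists_two_pow_sub_one_eq {p : ℕ} (hp : p.Prime) (hp2 : p ≠ 2) :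
    ∃ q : ℕ, 2 ^ (p - 1) = p * q + 1 := by
  have h := Nat.ModEq.pow_totient ((Nat.coprime_primes Nat.prime_two hp).mpr hp2.symm)
  rw [Nat.totient_prime hp] at h
  obtain ⟨q, hq⟩ := (Nat.modEq_iff_dvd' Nat.one_le_two_pow).mp h.symm
  exact ⟨q, by have := Nat.one_le_two_pow (n := p - 1); omega⟩

theorem sum_inv_k_2k_sub_one_sq (p : ℕ) (hp : p.Prime) (hp3 : 3 < p) :
    ratCongr p 1
      (∑ k ∈ Finset.Icc 1 ((p - 1) / 2), 1 / ((k : ℚ) * (2 * k - 1) ^ 2))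
      (-4 * fermatQ p) := by
  have := Fact.mk hp
  obtain ⟨n, hn⟩ : Odd p := hp.odd_of_ne_two (by omega)
  obtain ⟨q, hq⟩ := exists_two_pow_sub_one_eq hp (by omega)
  have hhalf : (p - 1) / 2 = n := by omega
  have hfermat : fermatQ p = q := by
    have hp0 : (p : ℚ) ≠ 0 := by exact_mod_cast hp.ne_zero
    have : (2 : ℚ) ^ (p - 1) = p * q + 1 := by exact_mod_cast hq
    rw [fermatQ, this]
    field_simp
    ring
  have hres : HasResidue p (∑ k ∈ Icc 1 n, 1 / ((k : ℚ) * (2 * k - 1) ^ 2))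
      (∑ k ∈ Icc 1 n, 1 / ((k : ZMod p) * (2 * k - 1) ^ 2)) := by
    refine HasResidue.sum fun k hk => ?_
    obtain ⟨hk1, hkn⟩ := mem_Icc.mp hk
    have h1 : (k : ZMod p) ≠ 0 := ZMod.natCast_ne_zero_of_lt_s14 hk1 (by omega)
    have h2 : 2 * (k : ZMod p) - 1 ≠ 0 := by
      have := ZMod.natCast_ne_zero_of_lt_s14 (p := p) (k := 2 * k - 1) (by omega) (by omega)
      rwa [Nat.cast_sub (by omega), Nat.cast_mul, Nat.cast_ofNat, Nat.cast_one] at this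
    have := HasResidue.one_div_intCast (p := p) (m := k * (2 * k - 1) ^ 2)
      (by push_cast; exact mul_ne_zero h1 (pow_ne_zero 2 h2))
    exact_mod_cast this
  rw [ZMod.sum_one_div_mul_odd_sq hn hp3 hq] at hres
  have hzero := hres.sub_intCast (-4 * q)
  push_cast at hzero
  rw [sub_self] at hzero
  rw [ratCongr, hhalf, hfermat, pow_one]
  exact hzero.exists_eq_mul
end
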